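/- Subadditive ergodic limit (Lemma 3.2 of the paper): assume Assumption H. For every F ∈ ℝ^{n×d} there exists a set Ω_F ∈ ℱ with ℙ(Ω_F) = 1 such that for every ω ∈ Ω_F and every closed axis-parallel box Q = Π_{i=1}^d [a_i,b_i] with a_i < b_i for all i, the limit lim_{t→∞} m_F(ω; tQ)/|tQ| exists and equals W₀(F); moreover W₀(F) = inf_{k≥1} k^{−d} E[m_F(·;[0,k)^d)] = lim_{k→∞} k^{−d} E[m_F(·;[0,k)^d)]. -/

import Mathlib

open MeasureTheory Filter Metric Set
open scoped Classical
open scoped ENNReal Topology Pointwise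

noncomputable section

namespace StochHom

/-- `ℝ^d` with the Euclidean norm. -/
abbrev Rd (d : ℕ) : Type := EuclideanSpace ℝ (Fin d)

/-- `ℝ^n` with the Euclidean norm. -/
abbrev Rn (n : ℕ) : Type := EuclideanSpace ℝ (Fin n)

/-- The lattice `ℤ^d`. -/
abbrev Zd (d : ℕ) : Type := Fin d → ℤ

variable {d n : ℕ}

/-- The embedding of the lattice `ℤ^d` into `ℝ^d`. -/
def toRd (z : Zd d) : Rd d := (EuclideanSpace.equiv (Fin d) ℝ).symm fun i => (z i : ℝ)

/-- The standard basis vectors `eᵢ` of `ℤ^d`. -/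
def stdb (i : Fin d) : Zd d := fun j => if j = i then 1 else 0

/-- The interaction range `R = max {4√d, max_{b ∈ ℰ₀} |b|}`. -/
def irange (d : ℕ) (E0 : Finset (Zd d)) : ℝ :=
  max (4 * Real.sqrt d) (sSup ((fun b : Zd d => ‖toRd b‖) '' (E0 : Set (Zd d))))

variable {Ω : Type*} [MeasurableSpace Ω]

/-- The energy `E₁(ω; u, ℤ^d ∩ A)`. -/
def energy1 (τ : Zd d → Ω → Ω) (E0 : Finset (Zd d)) (V : Zd d → Ω → Rn n → ℝ)
    (ω : Ω) (u : Zd d → Rn n) (A : Set (Rd d)) : ℝ :=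
  ∑' z : Zd d, if toRd z ∈ A then
      ∑ b ∈ E0, V b (τ z ω) ((‖toRd b‖)⁻¹ • (u (z + b) - u z)) else 0

/-- The scaled energy `E_ε(ω; u, A)`, where a function `u : εℤ^d → ℝ^n` is identified with a
function on `ℤ^d` via `z ↦ u(εz)`, so that `∂_b^ε u (z) = (u (z+b) - u z)/(ε |b|)`. -/
def energyE (τ : Zd d → Ω → Ω) (E0 : Finset (Zd d)) (V : Zd d → Ω → Rn n → ℝ)
    (ε : ℝ) (ω : Ω) (u : Zd d → Rn n) (A : Set (Rd d)) : ℝ :=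
  ε ^ d * ∑' z : Zd d, if ε • toRd z ∈ A then
      ∑ b ∈ E0, V b (τ z ω) ((ε * ‖toRd b‖)⁻¹ • (u (z + b) - u z)) else 0

/-- The localized minimal energy `m_F(ω; A)`. -/
def mF (τ : Zd d → Ω → Ω) (E0 : Finset (Zd d)) (V : Zd d → Ω → Rn n → ℝ)
    (ω : Ω) (F : Rd d →L[ℝ] Rn n) (A : Set (Rd d)) : ℝ :=
  ⨅ φ : {φ : Zd d → Rn n // ∀ z : Zd d, infDist (toRd z) Aᶜ ≤ irange d E0 → φ z = 0},
    energy1 τ E0 V ω (fun z => F (toRd z) + φ.1 z) A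

/-- The half-open cube `[0,k)^d ⊂ ℝ^d`. -/
def cube (d k : ℕ) : Set (Rd d) := {x | ∀ i, 0 ≤ x i ∧ x i < (k : ℝ)}

/-- The homogenized energy density `W₀(F) = inf_{k ≥ 1} k⁻ᵈ E[m_F(·, [0,k)^d)]`. -/
def W0 (P : Measure Ω) (τ : Zd d → Ω → Ω) (E0 : Finset (Zd d))
    (V : Zd d → Ω → Rn n → ℝ) (F : Rd d →L[ℝ] Rn n) : ℝ :=
  ⨅ k : {k : ℕ // 0 < k}, (((k : ℕ) : ℝ) ^ d)⁻¹ * ∫ ω, mF τ E0 V ω F (cube d k) ∂P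

/-- Half-open axis-parallel box `Π_i [aᵢ, bᵢ)`. -/
def halfBox (a b : Fin d → ℝ) : Set (Rd d) := {x | ∀ i, a i ≤ x i ∧ x i < b i}

/-- Open axis-parallel box `Π_i (aᵢ, bᵢ)`. -/
def openBox (a b : Fin d → ℝ) : Set (Rd d) := {x | ∀ i, a i < x i ∧ x i < b i}

/-- Closed axis-parallel box `Π_i [aᵢ, bᵢ]`. -/
def closedBox (a b : Fin d → ℝ) : Set (Rd d) := {x | ∀ i, a i ≤ x i ∧ x i ≤ b i}

/-- Half-open axis-parallel box with integer corners. -/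
def intBox (a b : Zd d) : Set (Rd d) := {x | ∀ i, (a i : ℝ) ≤ x i ∧ x i < (b i : ℝ)}

/-- The periodic cell minimization `W^{(k)}(ω; F)`. -/
def Wper (τ : Zd d → Ω → Ω) (E0 : Finset (Zd d)) (V : Zd d → Ω → Rn n → ℝ)
    (k : ℕ) (ω : Ω) (F : Rd d →L[ℝ] Rn n) : ℝ :=
  ⨅ φ : {φ : Zd d → Rn n // ∀ z z' : Zd d, φ (z + k • z') = φ z},
    ((k : ℝ) ^ d)⁻¹ * energy1 τ E0 V ω (fun z => F (toRd z) + φ.1 z) (cube d k)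


/-- The discrete cube of radius `r` around `z`. -/
def bz (z : Zd d) (r : ℕ) : Finset (Zd d) :=
  Finset.Icc (fun i => z i - (r : ℤ)) (fun i => z i + (r : ℤ))

lemma mem_bz {z w : Zd d} {r : ℕ} : w ∈ bz z r ↔ ∀ i, z i - (r : ℤ) ≤ w i ∧ w i ≤ z i + r := by
  simp only [bz, Finset.mem_Icc, Pi.le_def]
  exact ⟨fun h i => ⟨h.1 i, h.2 i⟩, fun h => ⟨fun i => (h i).1, fun i => (h i).2⟩⟩

lemma mem_bz_iff_closedBall {z w : Zd d} {r : ℕ} : w ∈ bz z r ↔ w ∈ closedBall z (r : ℝ) := by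
  rw [mem_bz, mem_closedBall, dist_pi_le_iff (by positivity)]
  refine forall_congr' fun i => ?_
  rw [Int.dist_eq, abs_le]
  constructor
  · rintro ⟨h1, h2⟩
    have h1' : (z i : ℝ) - r ≤ w i := by exact_mod_cast h1
    have h2' : (w i : ℝ) ≤ z i + r := by exact_mod_cast h2
    constructor <;> linarith
  · rintro ⟨h1, h2⟩
    have h1' : (z i : ℝ) - r ≤ w i := by linarith
    have h2' : (w i : ℝ) ≤ z i + r := by linarith
    exact ⟨by exact_mod_cast h1', by exact_mod_cast h2'⟩

lemma card_bz (z : Zd d) (r : ℕ) : (bz z r).card = (2 * r + 1) ^ d := by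
  simp only [bz, Pi.card_Icc, Int.card_Icc]
  rw [Finset.prod_congr rfl (g := fun _ => 2 * r + 1)]
  · simp
  · intro i _
    have : z i + (r : ℤ) + 1 - (z i - r) = ((2 * r + 1 : ℕ) : ℤ) := by push_cast; ring
    rw [this]; rfl

lemma count_bad (σ : Zd d → Ω → Ω) (G : ℕ → Ω → ℝ) (hG : ∀ r ω, 0 ≤ G r ω)
    (hsup : ∀ (ω : Ω) (N : ℕ) (s : Finset (Zd d)) (r : Zd d → ℕ),
      (∀ z ∈ s, bz z (r z) ⊆ bz 0 N) →
      ((s : Set (Zd d)).PairwiseDisjoint fun z => bz z (r z)) →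
      ∑ z ∈ s, G (r z) (σ z ω) ≤ G N ω) (δ : ℝ) (hδ : 0 < δ) (J N : ℕ) (ω : Ω) :
    δ * ∑ z ∈ bz (0 : Zd d) N,
      ({ω | ∃ r ≤ J, δ * (2 * r + 1 : ℝ) ^ d < G r ω}.indicator 1 (σ z ω) : ℝ)
      ≤ 5 ^ d * G (N + J) ω := by
  set E := {ω | ∃ r ≤ J, δ * (2 * r + 1 : ℝ) ^ d < G r ω} with hE
  set t : Finset (Zd d) := (bz (0 : Zd d) N).filter (fun z => σ z ω ∈ E) with ht
  have hr : ∀ z : Zd d, ∃ r : ℕ, z ∈ t → r ≤ J ∧ δ * (2 * r + 1 : ℝ) ^ d < G r (σ z ω) := by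
    intro z
    by_cases hz : z ∈ t
    · have h2 := (Finset.mem_filter.1 hz).2
      obtain ⟨r, h, h'⟩ := h2
      exact ⟨r, fun _ => ⟨h, h'⟩⟩
    · exact ⟨0, fun h => absurd h hz⟩
  choose r hr using hr
  obtain ⟨u, hut, hdis, hcov⟩ :=
    Vitali.exists_disjoint_subfamily_covering_enlargement_closedBall (t : Set (Zd d))
      (id : Zd d → Zd d) (fun z => (r z : ℝ)) J
      (fun a ha => by exact_mod_cast (hr a ha).1) 5 (by norm_num)
  have hufin : u.Finite := t.finite_toSet.subset hut
  lift u to Finset (Zd d) using hufin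
  have hut' : u ⊆ t := by exact_mod_cast hut
  have h1 : ∑ z ∈ u, G (r z) (σ z ω) ≤ G (N + J) ω := by
    apply hsup
    · intro z hz w hw
      have h := hr z (hut' hz)
      have hz' := mem_bz.1 (Finset.mem_filter.1 (hut' hz)).1
      rw [mem_bz] at hw ⊢
      intro i
      have a1 := hz' i
      have a2 := hw i
      have a3 := h.1
      simp only [Pi.zero_apply, Nat.cast_add] at *
      omega
    · intro z hz w hw hzw
      have h := hdis hz hw hzw
      simp only [Function.onFun, id] at h ⊢
      rw [Finset.disjoint_left]
      intro x hx hx'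
      exact Set.disjoint_left.1 h (mem_bz_iff_closedBall.1 hx) (mem_bz_iff_closedBall.1 hx')
  have h2 : t ⊆ u.biUnion (fun z => bz z (5 * r z)) := by
    intro z hz
    obtain ⟨b, hb, hzb⟩ := hcov z hz
    rw [Finset.mem_biUnion]
    refine ⟨b, hb, ?_⟩
    rw [mem_bz_iff_closedBall]
    push_cast
    exact hzb (mem_closedBall_self (by positivity))
  have h3 : (t.card : ℝ) ≤ ∑ z ∈ u, 5 ^ d * (2 * (r z : ℝ) + 1) ^ d := by
    have h4 := (Finset.card_le_card h2).trans Finset.card_biUnion_le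
    have h5 : (t.card : ℝ) ≤ ∑ z ∈ u, ((bz z (5 * r z)).card : ℝ) := by exact_mod_cast h4
    refine h5.trans (Finset.sum_le_sum fun z _ => ?_)
    rw [card_bz, ← mul_pow]
    push_cast
    gcongr
    linarith [(Nat.cast_nonneg (r z) : (0 : ℝ) ≤ r z)]
  have h6 : ∑ z ∈ bz (0 : Zd d) N, (E.indicator 1 (σ z ω) : ℝ) = t.card := by
    rw [ht, Finset.card_filter]
    push_cast
    refine Finset.sum_congr rfl fun z _ => ?_
    simp [Set.indicator_apply]
  rw [h6]
  calc δ * (t.card : ℝ) ≤ δ * ∑ z ∈ u, 5 ^ d * (2 * (r z : ℝ) + 1) ^ d := by gcongr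
    _ = 5 ^ d * ∑ z ∈ u, δ * (2 * (r z : ℝ) + 1) ^ d := by
        rw [Finset.mul_sum, Finset.mul_sum]
        exact Finset.sum_congr rfl fun _ _ => by ring
    _ ≤ 5 ^ d * ∑ z ∈ u, G (r z) (σ z ω) := by
        gcongr with z hz
        exact (hr z (hut' hz)).2.le
    _ ≤ 5 ^ d * G (N + J) ω := by gcongr

theorem maximal_ineq (P : Measure Ω) [IsProbabilityMeasure P]
    (σ : Zd d → Ω → Ω) (hσ : ∀ z, MeasurePreserving (σ z) P P)
    (G : ℕ → Ω → ℝ) (hG : ∀ r ω, 0 ≤ G r ω) (hGm : ∀ r, Measurable (G r))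
    (hGi : ∀ r, Integrable (G r) P)
    (hsup : ∀ (ω : Ω) (N : ℕ) (s : Finset (Zd d)) (r : Zd d → ℕ),
      (∀ z ∈ s, bz z (r z) ⊆ bz 0 N) →
      ((s : Set (Zd d)).PairwiseDisjoint fun z => bz z (r z)) →
      ∑ z ∈ s, G (r z) (σ z ω) ≤ G N ω)
    (γ : ℝ) (hγ : ∀ r, ∫ ω, G r ω ∂P ≤ γ * (2 * r + 1 : ℝ) ^ d) (δ : ℝ) (hδ : 0 < δ) :
    P {ω | ∃ r : ℕ, δ * (2 * r + 1 : ℝ) ^ d < G r ω} ≤ ENNReal.ofReal (5 ^ d * γ / δ) := by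
  have hEm : ∀ J : ℕ, MeasurableSet {ω | ∃ r ≤ J, δ * (2 * r + 1 : ℝ) ^ d < G r ω} := by
    intro J
    have : {ω | ∃ r ≤ J, δ * (2 * r + 1 : ℝ) ^ d < G r ω}
        = ⋃ r ∈ Set.Iic J, {ω | δ * (2 * r + 1 : ℝ) ^ d < G r ω} := by
      ext ω; simp
    rw [this]
    exact MeasurableSet.biUnion (Set.to_countable _)
      fun r _ => measurableSet_lt measurable_const (hGm r)
  have hJ : ∀ J : ℕ, P {ω | ∃ r ≤ J, δ * (2 * r + 1 : ℝ) ^ d < G r ω}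
      ≤ ENNReal.ofReal (5 ^ d * γ / δ) := by
    intro J
    set E := {ω | ∃ r ≤ J, δ * (2 * r + 1 : ℝ) ^ d < G r ω} with hE
    have key : ∀ N : ℕ, δ * ((2 * N + 1 : ℝ) ^ d * P.real E)
        ≤ 5 ^ d * (γ * (2 * (N + J : ℕ) + 1 : ℝ) ^ d) := by
      intro N
      have hintegr : ∀ z : Zd d, Integrable (fun ω => (E.indicator 1 (σ z ω) : ℝ)) P := by
        intro z
        have : Integrable (E.indicator (1 : Ω → ℝ)) P :=
          (integrable_const (1 : ℝ)).indicator (hEm J)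
        exact ((hσ z).integrable_comp (this.aestronglyMeasurable)).2 this
      have hval : ∀ z : Zd d, ∫ ω, (E.indicator 1 (σ z ω) : ℝ) ∂P = P.real E := by
        intro z
        have h0 : ∀ ω, (E.indicator 1 (σ z ω) : ℝ) = ((σ z) ⁻¹' E).indicator 1 ω := by
          intro ω; simp [Set.indicator_apply]
        simp_rw [h0]
        rw [integral_indicator_one ((hσ z).measurable (hEm J))]
        simp only [Measure.real]
        rw [(hσ z).measure_preimage (hEm J).nullMeasurableSet]
      have h := integral_mono (μ := P)
        (((integrable_finsetSum (bz (0 : Zd d) N) fun z _ => hintegr z).const_mul δ))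
        ((hGi (N + J)).const_mul (5 ^ d))
        (fun ω => count_bad σ G hG hsup δ hδ J N ω)
      rw [integral_const_mul, integral_const_mul, integral_finsetSum _ (fun z _ => hintegr z)] at h
      simp_rw [hval] at h
      rw [Finset.sum_const, card_bz, nsmul_eq_mul] at h
      push_cast at h
      refine h.trans ?_
      have := hγ (N + J)
      push_cast at this ⊢
      gcongr
    have hlim : Tendsto (fun N : ℕ => 5 ^ d * γ / δ *
        (((2 * (N + J : ℕ) + 1 : ℝ) / (2 * N + 1)) ^ d)) atTop (𝓝 (5 ^ d * γ / δ * 1 ^ d)) := by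
      refine Tendsto.const_mul _ (Tendsto.pow ?_ d)
      have : Tendsto (fun N : ℕ => 1 + (2 * J : ℝ) / (2 * N + 1)) atTop (𝓝 (1 + 0)) := by
        refine tendsto_const_nhds.add (Tendsto.div_atTop tendsto_const_nhds ?_)
        exact tendsto_atTop_add_const_right _ _
          (Tendsto.const_mul_atTop (by norm_num) tendsto_natCast_atTop_atTop)
      rw [add_zero] at this
      refine this.congr fun N => ?_
      have : (2 * N + 1 : ℝ) ≠ 0 := by positivity
      field_simp
      push_cast
      ring
    have hle : P.real E ≤ 5 ^ d * γ / δ := by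
      rw [one_pow, mul_one] at hlim
      refine ge_of_tendsto' hlim fun N => ?_
      have h := key N
      rw [div_pow, div_mul_div_comm, le_div_iff₀ (by positivity)]
      linarith
    rw [← ofReal_measureReal]
    exact ENNReal.ofReal_le_ofReal hle
  have hun : {ω | ∃ r : ℕ, δ * (2 * r + 1 : ℝ) ^ d < G r ω}
      = ⋃ J : ℕ, {ω | ∃ r ≤ J, δ * (2 * r + 1 : ℝ) ^ d < G r ω} := by
    ext ω
    simp only [mem_ofPred_eq, mem_iUnion]
    exact ⟨fun ⟨r, h⟩ => ⟨r, r, le_rfl, h⟩, fun ⟨_, r, _, h⟩ => ⟨r, h⟩⟩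
  rw [hun, Monotone.measure_iUnion]
  · exact iSup_le hJ
  · intro J J' hJJ ω
    rintro ⟨r, h, h'⟩
    exact ⟨r, h.trans hJJ, h'⟩


/-- Lattice points of the closed box `t [a,b]`. -/
def lat (a b : Fin d → ℝ) (t : ℝ) : Finset (Zd d) :=
  Finset.Icc (fun i => ⌈t * a i⌉) (fun i => ⌊t * b i⌋)

lemma mem_lat {a b : Fin d → ℝ} {t : ℝ} {z : Zd d} :
    z ∈ lat a b t ↔ ∀ i, t * a i ≤ z i ∧ (z i : ℝ) ≤ t * b i := by
  simp only [lat, Finset.mem_Icc, Pi.le_def, Int.ceil_le, Int.le_floor]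
  exact ⟨fun h i => ⟨h.1 i, h.2 i⟩, fun h => ⟨fun i => (h i).1, fun i => (h i).2⟩⟩

lemma tendsto_side (a b : ℝ) (hab : a < b) :
    Tendsto (fun t : ℝ => t⁻¹ * ((⌊t * b⌋ + 1 - ⌈t * a⌉).toNat : ℝ)) atTop (𝓝 (b - a)) := by
  have hl : Tendsto (fun t : ℝ => (b - a) - t⁻¹) atTop (𝓝 (b - a)) := by
    simpa using (tendsto_const_nhds (x := b - a)).sub (tendsto_inv_atTop_zero (𝕜 := ℝ))
  have hu : Tendsto (fun t : ℝ => (b - a) + t⁻¹) atTop (𝓝 (b - a)) := by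
    simpa using (tendsto_const_nhds (x := b - a)).add (tendsto_inv_atTop_zero (𝕜 := ℝ))
  have key : ∀ t : ℝ, 0 < t → t * (b - a) - 1 ≤ ((⌊t * b⌋ + 1 - ⌈t * a⌉).toNat : ℝ) ∧
      ((⌊t * b⌋ + 1 - ⌈t * a⌉).toNat : ℝ) ≤ t * (b - a) + 1 := by
    intro t ht
    have hpos : 0 < t * (b - a) := mul_pos ht (by linarith)
    have h1 := Int.lt_floor_add_one (t * b)
    have h2 := Int.ceil_lt_add_one (t * a)
    have h3 := Int.floor_le (t * b)
    have h4 := Int.le_ceil (t * a)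
    have h5 : ((⌊t * b⌋ + 1 - ⌈t * a⌉ : ℤ) : ℝ) > -1 := by push_cast; nlinarith
    have h6 : (0 : ℤ) ≤ ⌊t * b⌋ + 1 - ⌈t * a⌉ := by
      have : (-1 : ℤ) < ⌊t * b⌋ + 1 - ⌈t * a⌉ := by exact_mod_cast h5
      omega
    have h7 : ((⌊t * b⌋ + 1 - ⌈t * a⌉).toNat : ℝ) = ((⌊t * b⌋ + 1 - ⌈t * a⌉ : ℤ) : ℝ) := by
      rw [← Int.cast_natCast, Int.toNat_of_nonneg h6]
    rw [h7]; push_cast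
    constructor <;> nlinarith
  refine tendsto_of_tendsto_of_tendsto_of_le_of_le' hl hu ?_ ?_
  · filter_upwards [eventually_gt_atTop 0] with t ht
    have := (key t ht).1
    calc (b - a) - t⁻¹ = t⁻¹ * (t * (b - a) - 1) := by field_simp
      _ ≤ _ := by gcongr
  · filter_upwards [eventually_gt_atTop 0] with t ht
    have := (key t ht).2
    calc _ ≤ t⁻¹ * (t * (b - a) + 1) := by gcongr
      _ = (b - a) + t⁻¹ := by field_simp

lemma card_lat_eq (a b : Fin d → ℝ) (t : ℝ) :
    ((lat a b t).card : ℝ) = ∏ i, ((⌊t * b i⌋ + 1 - ⌈t * a i⌉).toNat : ℝ) := by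
  simp [lat, Pi.card_Icc]

lemma tendsto_card_lat (a b : Fin d → ℝ) (hab : ∀ i, a i < b i) :
    Tendsto (fun t : ℝ => (t ^ d)⁻¹ * ((lat a b t).card : ℝ)) atTop (𝓝 (∏ i, (b i - a i))) := by
  have := tendsto_finsetProd (Finset.univ : Finset (Fin d))
    (fun i _ => tendsto_side (a i) (b i) (hab i))
  refine this.congr fun t => ?_
  rw [card_lat_eq, Finset.prod_mul_distrib]
  simp

/-- Convergence of the ergodic averages of `f` on all boxes. -/
def Good (P : Measure Ω) (τ : Zd d → Ω → Ω) (f : Ω → ℝ) (ω : Ω) : Prop :=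
  ∀ a b : Fin d → ℝ, (∀ i, a i < b i) →
    Tendsto (fun t : ℝ => (t ^ d)⁻¹ * ∑ z ∈ lat a b t, f (τ z ω)) atTop
      (𝓝 ((∏ i, (b i - a i)) * ∫ ω, f ω ∂P))

lemma Good.congr {P : Measure Ω} {τ : Zd d → Ω → Ω} {f g : Ω → ℝ} 
    (hτ : ∀ z, MeasurePreserving (τ z) P P)
    (hfg : f =ᵐ[P] g) (hf : ∀ᵐ ω ∂P, Good P τ f ω) : ∀ᵐ ω ∂P, Good P τ g ω := by
  have h : ∀ᵐ ω ∂P, ∀ z : Zd d, f (τ z ω) = g (τ z ω) := by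
    rw [ae_all_iff]
    intro z
    exact (hτ z).quasiMeasurePreserving.ae hfg
  filter_upwards [hf, h] with ω h1 h2 a b hab
  have h3 := h1 a b hab
  rw [integral_congr_ae hfg] at h3
  refine h3.congr fun t => ?_
  simp_rw [h2]

lemma Good.add {P : Measure Ω} {τ : Zd d → Ω → Ω} {f g : Ω → ℝ} {ω : Ω}
    (hfi : Integrable f P) (hgi : Integrable g P) (hf : Good P τ f ω) (hg : Good P τ g ω) :
    Good P τ (f + g) ω := by
  intro a b hab
  have := (hf a b hab).add (hg a b hab)
  rw [← mul_add, ← integral_add hfi hgi] at this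
  refine this.congr fun t => ?_
  rw [← mul_add, ← Finset.sum_add_distrib]
  rfl

lemma Good.smul {P : Measure Ω} {τ : Zd d → Ω → Ω} {f : Ω → ℝ} {ω : Ω} (c : ℝ)
    (hf : Good P τ f ω) : Good P τ (c • f) ω := by
  intro a b hab
  have := (hf a b hab).const_mul c
  simp only [Pi.smul_apply, smul_eq_mul, integral_const_mul]
  convert this using 2
  · rw [← Finset.mul_sum]; ring
  · ring

lemma Good.const {P : Measure Ω} [IsProbabilityMeasure P] {τ : Zd d → Ω → Ω} {ω : Ω} (c : ℝ) :
    Good P τ (fun _ => c) ω := by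
  intro a b hab
  have := (tendsto_card_lat a b hab).mul_const c
  simp only [Finset.sum_const, nsmul_eq_mul, integral_const, probReal_univ, one_smul, ← mul_assoc]
  exact this

lemma maximal_add (P : Measure Ω) [IsProbabilityMeasure P] (τ : Zd d → Ω → Ω)
    (hτadd : ∀ x y : Zd d, τ (x + y) = τ x ∘ τ y)
    (hτ : ∀ z, MeasurePreserving (τ z) P P) (f : Ω → ℝ) (hf0 : ∀ ω, 0 ≤ f ω) (hfm : Measurable f)
    (hfi : Integrable f P) (δ : ℝ) (hδ : 0 < δ) :
    P {ω | ∃ r : ℕ, δ * (2 * r + 1 : ℝ) ^ d < ∑ z ∈ bz (0 : Zd d) r, f (τ z ω)}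
      ≤ ENNReal.ofReal (5 ^ d * (∫ ω, f ω ∂P) / δ) := by
  have hintegr : ∀ z, Integrable (fun ω => f (τ z ω)) P := fun z =>
    ((hτ z).integrable_comp hfi.aestronglyMeasurable).2 hfi
  have hval : ∀ z, ∫ ω, f (τ z ω) ∂P = ∫ ω, f ω ∂P := fun z => by
    rw [← integral_map (hτ z).measurable.aemeasurable
      (by rw [(hτ z).map_eq]; exact hfi.aestronglyMeasurable), (hτ z).map_eq]
  refine maximal_ineq P τ hτ (fun r ω => ∑ z ∈ bz (0 : Zd d) r, f (τ z ω))
    (fun r ω => Finset.sum_nonneg fun z _ => hf0 _)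
    (fun r => Finset.measurable_fun_sum _ fun z _ => hfm.comp (hτ z).measurable)
    (fun r => integrable_finsetSum _ fun z _ => hintegr z) ?_ _ (fun r => ?_) δ hδ
  · intro ω N s r hsub hdis
    have h1 : ∀ z ∈ s, ∑ w ∈ bz (0 : Zd d) (r z), f (τ w (τ z ω)) = ∑ w ∈ bz z (r z), f (τ w ω) := by
      intro z _
      refine Finset.sum_bij (fun w _ => w + z) ?_ ?_ ?_ ?_
      · intro w hw
        rw [mem_bz] at hw ⊢
        intro i
        have := hw i
        simp only [Pi.zero_apply, Pi.add_apply] at *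
        omega
      · intro a _ b _ h; exact add_right_cancel h
      · intro w hw
        refine ⟨w - z, ?_, by simp⟩
        rw [mem_bz] at hw ⊢
        intro i
        have := hw i
        simp only [Pi.zero_apply, Pi.sub_apply] at *
        omega
      · intro w _
        rw [hτadd]; rfl
    rw [Finset.sum_congr rfl h1, ← Finset.sum_biUnion hdis]
    refine Finset.sum_le_sum_of_subset_of_nonneg ?_ fun z _ _ => hf0 _
    exact Finset.biUnion_subset.2 hsub
  · rw [integral_finsetSum _ fun z _ => hintegr z]
    simp_rw [hval]
    rw [Finset.sum_const, card_bz, nsmul_eq_mul]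
    push_cast
    exact le_of_eq (mul_comm _ _)

lemma lat_subset_bz (a b : Fin d → ℝ) (M : ℝ) (hM : 0 ≤ M) (ha : ∀ i, -M ≤ a i) (hb : ∀ i, b i ≤ M)
    (t : ℝ) (ht : 1 ≤ t) : lat a b t ⊆ bz 0 ⌈t * M⌉₊ ∧
      (2 * (⌈t * M⌉₊ : ℝ) + 1) ^ d ≤ t ^ d * (2 * M + 3) ^ d := by
  have h0 : 0 ≤ t * M := by positivity
  have h1 := Nat.le_ceil (t * M)
  have h2 := Nat.ceil_lt_add_one h0
  constructor
  · intro z hz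
    rw [mem_lat] at hz
    rw [mem_bz]
    intro i
    have h3 : (-(⌈t * M⌉₊ : ℝ)) ≤ z i := by nlinarith [hz i, ha i]
    have h4 : (z i : ℝ) ≤ ⌈t * M⌉₊ := by nlinarith [hz i, hb i]
    simp only [Pi.zero_apply]
    constructor
    · have : -(⌈t * M⌉₊ : ℤ) ≤ z i := by exact_mod_cast h3
      omega
    · have : z i ≤ (⌈t * M⌉₊ : ℤ) := by exact_mod_cast h4
      omega
  · rw [← mul_pow]
    gcongr
    nlinarith

lemma exists_bound (a b : Fin d → ℝ) : ∃ M : ℝ, 0 < M ∧ (∀ i, -M ≤ a i) ∧ ∀ i, b i ≤ M := by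
  refine ⟨1 + ∑ i, (|a i| + |b i|), by positivity, fun i => ?_, fun i => ?_⟩
  all_goals
    have := Finset.single_le_sum (f := fun i => |a i| + |b i|) (fun i _ => by positivity)
      (Finset.mem_univ i)
  · linarith [neg_abs_le (a i), abs_nonneg (b i)]
  · linarith [le_abs_self (b i), abs_nonneg (a i)]

lemma good_closed (P : Measure Ω) [IsProbabilityMeasure P] (τ : Zd d → Ω → Ω)
    (hτadd : ∀ x y : Zd d, τ (x + y) = τ x ∘ τ y)
    (hτ : ∀ z, MeasurePreserving (τ z) P P) (f : Ω → ℝ) (hfm : Measurable f)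
    (hfi : Integrable f P)
    (happ : ∀ ε > 0, ∃ g : Ω → ℝ, Measurable g ∧ Integrable g P ∧ ∫ ω, |f ω - g ω| ∂P ≤ ε ∧
      ∀ᵐ ω ∂P, Good P τ g ω) : ∀ᵐ ω ∂P, Good P τ f ω := by
  have hpos : ∀ m j : ℕ, (0 : ℝ) < 1 / ((m + 1) * (j + 1)) := fun m j => by positivity
  choose g hgm hgi hfg hgood using fun m j : ℕ => happ _ (hpos m j)
  have hbad : ∀ m : ℕ, ∀ᵐ ω ∂P, ∃ j : ℕ, ∀ r : ℕ,
      ∑ z ∈ bz (0 : Zd d) r, |f (τ z ω) - g m j (τ z ω)| ≤ 1 / (m + 1) * (2 * r + 1 : ℝ) ^ d := by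
    intro m
    rw [ae_iff]
    have hle : ∀ j : ℕ, P {ω | ¬ ∃ j : ℕ, ∀ r : ℕ,
      ∑ z ∈ bz (0 : Zd d) r, |f (τ z ω) - g m j (τ z ω)| ≤ 1 / (m + 1) * (2 * r + 1 : ℝ) ^ d} ≤
        ENNReal.ofReal (5 ^ d / (j + 1)) := by
      intro j
      have h := maximal_add P τ hτadd hτ (fun ω => |f ω - g m j ω|) (fun ω => abs_nonneg _)
        ((hfm.sub (hgm m j)).abs) ((hfi.sub (hgi m j)).abs) (1 / (m + 1)) (by positivity)
      refine (measure_mono ?_).trans (h.trans (ENNReal.ofReal_le_ofReal ?_))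
      · intro ω hω
        simp only [mem_ofPred_eq, not_exists, not_forall, not_le] at hω ⊢
        exact hω j
      · have h1 := hfg m j
        calc 5 ^ d * (∫ ω, |f ω - g m j ω| ∂P) / (1 / (m + 1))
            ≤ 5 ^ d * (1 / ((m + 1) * (j + 1))) / (1 / (m + 1)) := by gcongr
          _ = 5 ^ d / (j + 1) := by field_simp
    have hlim : Tendsto (fun j : ℕ => ENNReal.ofReal (5 ^ d / (j + 1 : ℝ))) atTop (𝓝 0) := by
      rw [← ENNReal.ofReal_zero]
      refine ENNReal.tendsto_ofReal ?_
      exact Tendsto.div_atTop tendsto_const_nhds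
        (tendsto_atTop_add_const_right _ _ tendsto_natCast_atTop_atTop)
    exact le_antisymm (ge_of_tendsto' hlim hle) (bot_le)
  have hbad' := ae_all_iff.2 hbad
  have hgood' : ∀ᵐ ω ∂P, ∀ m j, Good P τ (g m j) ω :=
    ae_all_iff.2 fun m => ae_all_iff.2 fun j => hgood m j
  filter_upwards [hbad', hgood'] with ω h1 h2 a b hab
  obtain ⟨M, hM, hMa, hMb⟩ := exists_bound a b
  set vQ := ∏ i, (b i - a i) with hpi
  have hpi0 : 0 ≤ vQ := Finset.prod_nonneg fun i _ => by linarith [hab i]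
  rw [Metric.tendsto_atTop']
  intro ε hε
  -- choose m
  obtain ⟨m, hm⟩ := exists_nat_gt (3 * ((2 * M + 3) ^ d + vQ) / ε)
  obtain ⟨j, hj⟩ := h1 m
  have hm' : ((2 * M + 3) ^ d + vQ) * (1 / (m + 1)) < ε / 2 := by
    rw [div_lt_iff₀ hε] at hm
    rw [mul_one_div, div_lt_iff₀ (by positivity)]
    have : 0 < (2 * M + 3) ^ d + vQ := by positivity
    nlinarith
  have h3 := (Metric.tendsto_atTop'.1 (h2 m j a b hab)) (ε / 2) (by positivity)
  obtain ⟨T, hT⟩ := h3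
  refine ⟨max T 1, fun t ht => ?_⟩
  have ht1 : 1 ≤ t := (le_max_right _ _).trans ht.le
  have h4 := hT t ((le_max_left _ _).trans_lt ht)
  rw [Real.dist_eq] at h4 ⊢
  obtain ⟨hs1, hs2⟩ := lat_subset_bz a b M hM.le hMa hMb t ht1
  have h5 : |(t ^ d)⁻¹ * ∑ z ∈ lat a b t, f (τ z ω) - (t ^ d)⁻¹ * ∑ z ∈ lat a b t, g m j (τ z ω)|
      ≤ (2 * M + 3) ^ d * (1 / (m + 1)) := by
    have htd : 0 < t ^ d := by positivity
    rw [← mul_sub, abs_mul, abs_of_pos (by positivity), ← Finset.sum_sub_distrib,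
      inv_mul_le_iff₀ htd]
    calc |∑ z ∈ lat a b t, (f (τ z ω) - g m j (τ z ω))|
        ≤ ∑ z ∈ lat a b t, |f (τ z ω) - g m j (τ z ω)| := Finset.abs_sum_le_sum_abs _ _
      _ ≤ ∑ z ∈ bz (0 : Zd d) ⌈t * M⌉₊, |f (τ z ω) - g m j (τ z ω)| :=
          Finset.sum_le_sum_of_subset_of_nonneg hs1 fun _ _ _ => abs_nonneg _
      _ ≤ 1 / (m + 1) * (2 * (⌈t * M⌉₊ : ℝ) + 1) ^ d := hj _
      _ ≤ 1 / (m + 1) * (t ^ d * (2 * M + 3) ^ d) := by gcongr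
      _ = _ := by ring
  have h6 : |vQ * ∫ ω, f ω ∂P - vQ * ∫ ω, g m j ω ∂P| ≤ vQ * (1 / (m + 1)) := by
    rw [← mul_sub, abs_mul, abs_of_nonneg hpi0, ← integral_sub hfi (hgi m j)]
    gcongr
    refine (abs_integral_le_integral_abs).trans ((hfg m j).trans ?_)
    gcongr
    have : (0 : ℝ) ≤ j := by positivity
    have : (0 : ℝ) ≤ m := by positivity
    nlinarith
  rw [abs_le] at h5 h6
  rw [abs_lt] at h4 ⊢
  rw [add_mul] at hm'
  constructor <;> linarith [h5.1, h5.2, h6.1, h6.2, h4.1, h4.2]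


lemma good_cobdd_bounded (P : Measure Ω) [IsProbabilityMeasure P] (τ : Zd d → Ω → Ω)
    (hτadd : ∀ x y : Zd d, τ (x + y) = τ x ∘ τ y)
    (hτ : ∀ z, MeasurePreserving (τ z) P P) (i : Fin d) (g : Ω → ℝ)
    (hgi : Integrable g P) (C : ℝ) (hC : ∀ ω, |g ω| ≤ C) (ω : Ω) :
    Good P τ (fun ω => g (τ (stdb i) ω) - g ω) ω := by
  intro a b hab
  have hC0 : 0 ≤ C := (abs_nonneg _).trans (hC ω)
  have hintegr : Integrable (fun ω => g (τ (stdb i) ω)) P :=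
    ((hτ _).integrable_comp hgi.aestronglyMeasurable).2 hgi
  have hval : ∫ ω, g (τ (stdb i) ω) ∂P = ∫ ω, g ω ∂P := by
    rw [← integral_map (hτ _).measurable.aemeasurable
      (by rw [(hτ _).map_eq]; exact hgi.aestronglyMeasurable), (hτ _).map_eq]
  rw [integral_sub hintegr hgi, hval, sub_self, mul_zero]
  -- the face
  set face : ℝ → Finset (Zd d) := fun t => Finset.Icc (fun j => ⌈t * a j⌉)
    (fun j => if j = i then ⌈t * a i⌉ else ⌊t * b j⌋) with hface
  have hfc : Tendsto (fun t : ℝ => (t ^ d)⁻¹ * ((face t).card : ℝ)) atTop (𝓝 0) := by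
    have h := tendsto_finsetProd (Finset.univ : Finset (Fin d)) 
      (f := fun j (t : ℝ) => t⁻¹ * (((if j = i then ⌈t * a i⌉ else ⌊t * b j⌋) + 1 
        - ⌈t * a j⌉).toNat : ℝ)) (a := fun j => if j = i then 0 else b j - a j) (x := atTop) ?_
    · rw [Finset.prod_eq_zero (Finset.mem_univ i) (by simp)] at h
      refine h.congr fun t => ?_
      rw [Finset.prod_mul_distrib]
      simp [hface, Pi.card_Icc]
    · intro j _
      by_cases hj : j = i
      · subst hj
        simp only [if_true, add_sub_cancel_left]
        simpa using tendsto_inv_atTop_zero (𝕜 := ℝ)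
      · simp only [hj, if_false]
        exact tendsto_side _ _ (hab j)
  have hbound : ∀ t : ℝ, |∑ z ∈ lat a b t, (g (τ (stdb i) (τ z ω)) - g (τ z ω))| 
      ≤ 2 * C * ((face t).card : ℝ) := by
    intro t
    set s := lat a b t with hs
    set s' : Finset (Zd d) := s.map (addLeftEmbedding (stdb i)) with hs'
    have h1 : ∑ z ∈ s, g (τ (stdb i) (τ z ω)) = ∑ z ∈ s', g (τ z ω) := by
      rw [hs', Finset.sum_map]
      refine Finset.sum_congr rfl fun z _ => ?_
      simp only [addLeftEmbedding_apply, hτadd]; rfl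
    have hcard : s'.card = s.card := Finset.card_map _
    have h2 : (s \ s').card ≤ (face t).card := by
      refine Finset.card_le_card fun z hz => ?_
      rw [Finset.mem_sdiff] at hz
      have hz1 := hz.1
      simp only [hs, lat, Finset.mem_Icc, Pi.le_def] at hz1
      simp only [hface, Finset.mem_Icc, Pi.le_def]
      refine ⟨hz1.1, fun j => ?_⟩
      by_cases hj : j = i
      · subst hj
        simp only [if_true]
        by_contra hlt
        push Not at hlt
        apply hz.2
        rw [hs', Finset.mem_map]
        refine ⟨z - stdb j, ?_, by simp⟩
        simp only [hs, lat, Finset.mem_Icc, Pi.le_def]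
        constructor
        · intro l
          have := hz1.1 l
          simp only [Pi.sub_apply, stdb]
          split_ifs with h
          · subst h; omega
          · simpa using this
        · intro l
          have := hz1.2 l
          simp only [Pi.sub_apply, stdb]
          split_ifs <;> omega
      · simp only [hj, if_false]; exact hz1.2 j
    have h3 : (s' \ s).card = (s \ s').card := by
      have e1 := Finset.card_sdiff_add_card_inter s' s
      have e2 := Finset.card_sdiff_add_card_inter s s'
      rw [Finset.inter_comm] at e2
      omega
    have h4 : ∑ z ∈ s', g (τ z ω) - ∑ z ∈ s, g (τ z ω)
        = ∑ z ∈ s' \ s, g (τ z ω) - ∑ z ∈ s \ s', g (τ z ω) := by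
      rw [← Finset.sum_sdiff_sub_sum_sdiff]
    rw [Finset.sum_sub_distrib, h1, h4]
    have h5 : ∀ u : Finset (Zd d), |∑ z ∈ u, g (τ z ω)| ≤ u.card * C := by
      intro u
      refine (Finset.abs_sum_le_sum_abs _ _).trans ?_
      refine (Finset.sum_le_card_nsmul u _ C fun z _ => hC _).trans ?_
      rw [nsmul_eq_mul]
    have h6 := h5 (s' \ s)
    have h7 := h5 (s \ s')
    rw [h3] at h6
    have h8 : ((s \ s').card : ℝ) ≤ (face t).card := by exact_mod_cast h2
    have h9 : ((s \ s').card : ℝ) * C ≤ (face t).card * C := by gcongr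
    refine (abs_sub _ _).trans ?_
    linarith
  have hz : Tendsto (fun t : ℝ => 2 * C * ((t ^ d)⁻¹ * ((face t).card : ℝ))) atTop (𝓝 0) := by
    simpa using hfc.const_mul (2 * C)
  refine squeeze_zero_norm' ?_ hz
  filter_upwards [eventually_gt_atTop 0] with t ht
  rw [Real.norm_eq_abs, abs_mul, abs_of_pos (by positivity)]
  calc _ ≤ (t ^ d)⁻¹ * (2 * C * ((face t).card : ℝ)) := by gcongr; exact hbound t
    _ = _ := by ring

lemma good_cobdd (P : Measure Ω) [IsProbabilityMeasure P] (τ : Zd d → Ω → Ω)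
    (hτadd : ∀ x y : Zd d, τ (x + y) = τ x ∘ τ y)
    (hτ : ∀ z, MeasurePreserving (τ z) P P) (i : Fin d) (f : Ω → ℝ) (hfm : Measurable f)
    (hfi : Integrable f P) : ∀ᵐ ω ∂P, Good P τ (fun ω => f (τ (stdb i) ω) - f ω) ω := by
  have hcomp : ∀ g : Ω → ℝ, Integrable g P → Integrable (fun ω => g (τ (stdb i) ω)) P :=
    fun g hg => ((hτ _).integrable_comp hg.aestronglyMeasurable).2 hg
  have hval : ∀ g : Ω → ℝ, Integrable g P → ∫ ω, g (τ (stdb i) ω) ∂P = ∫ ω, g ω ∂P := by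
    intro g hg
    rw [← integral_map (hτ _).measurable.aemeasurable
      (by rw [(hτ _).map_eq]; exact hg.aestronglyMeasurable), (hτ _).map_eq]
  refine good_closed P τ hτadd hτ _ ((hfm.comp (hτ _).measurable).sub hfm)
    ((hcomp f hfi).sub hfi) fun ε hε => ?_
  obtain ⟨g, hg, hgm⟩ := (memLp_one_iff_integrable.2 hfi).exists_simpleFunc_eLpNorm_sub_lt
    (by simp) (ε := ENNReal.ofReal (ε / 2)) (by simpa using hε)
  have hgi : Integrable g P := memLp_one_iff_integrable.1 hgm
  obtain ⟨C, hC⟩ := g.exists_forall_norm_le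
  refine ⟨fun ω => g (τ (stdb i) ω) - g ω, (g.measurable.comp (hτ _).measurable).sub g.measurable,
    (hcomp g hgi).sub hgi, ?_, ae_of_all _ fun ω => 
      good_cobdd_bounded P τ hτadd hτ i g hgi C hC ω⟩
  have hsub : Integrable (fun ω => |f ω - g ω|) P := (hfi.sub hgi).abs
  have h1 : ∫ ω, |f ω - g ω| ∂P ≤ ε / 2 := by
    have : eLpNorm (f - ⇑g) 1 P = ENNReal.ofReal (∫ ω, |f ω - g ω| ∂P) := by
      rw [eLpNorm_one_eq_lintegral_enorm, ← ofReal_integral_norm_eq_lintegral_enorm (hfi.sub hgi)]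
      rfl
    rw [this] at hg
    exact ((ENNReal.ofReal_lt_ofReal_iff (by positivity)).1 hg).le
  calc ∫ ω, |f (τ (stdb i) ω) - f ω - (g (τ (stdb i) ω) - g ω)| ∂P
      ≤ ∫ ω, (|f (τ (stdb i) ω) - g (τ (stdb i) ω)| + |f ω - g ω|) ∂P := by
        refine integral_mono (((hcomp f hfi).sub hfi).sub ((hcomp g hgi).sub hgi)).abs
          ((hcomp _ hsub).add hsub) fun ω => ?_
        simp only
        rw [show f (τ (stdb i) ω) - f ω - (g (τ (stdb i) ω) - g ω) = 
          (f (τ (stdb i) ω) - g (τ (stdb i) ω)) - (f ω - g ω) by ring]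
        exact abs_sub _ _
    _ = ∫ ω, |f ω - g ω| ∂P + ∫ ω, |f ω - g ω| ∂P := by
        rw [integral_add (hcomp _ hsub) hsub, hval _ hsub]
    _ ≤ ε := by linarith

lemma invariant_const (P : Measure Ω) [IsProbabilityMeasure P] (τ : Zd d → Ω → Ω)
    (hτ0 : τ 0 = id)
    (hτadd : ∀ x y : Zd d, τ (x + y) = τ x ∘ τ y)
    (hτ : ∀ z, MeasurePreserving (τ z) P P)
    (hτerg : ∀ B : Set Ω, MeasurableSet B → (∀ z : Zd d, τ z ⁻¹' B = B) → P B = 0 ∨ P B = 1)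
    (f : Ω → ℝ) (hfm : Measurable f)
    (hinv : ∀ i, f ∘ τ (stdb i) =ᵐ[P] f) : ∃ c : ℝ, f =ᵐ[P] fun _ => c := by
  have hall : ∀ z : Zd d, f ∘ τ z =ᵐ[P] f := by
    let H : AddSubgroup (Zd d) :=
      { carrier := {z | f ∘ τ z =ᵐ[P] f}
        zero_mem' := by simp [hτ0]
        add_mem' := by
          intro x y hx hy
          have h1 : (f ∘ τ x) ∘ τ y =ᵐ[P] f ∘ τ y := (hτ y).quasiMeasurePreserving.ae_eq hx
          change f ∘ τ (x + y) =ᵐ[P] f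
          rw [hτadd, ← Function.comp_assoc]
          exact h1.trans hy
        neg_mem' := by
          intro x hx
          have h1 : (f ∘ τ x) ∘ τ (-x) =ᵐ[P] f ∘ τ (-x) :=
            (hτ (-x)).quasiMeasurePreserving.ae_eq hx
          rw [Function.comp_assoc, ← hτadd, add_neg_cancel, hτ0] at h1
          exact h1.symm }
    intro z
    have hz : z = ∑ i, z i • stdb i := by
      funext j
      simp [Finset.sum_apply, stdb]
    have : z ∈ H := by
      rw [hz]
      exact H.sum_mem fun i _ => H.zsmul_mem (hinv i) _
    exact this
  obtain ⟨c, hc⟩ := exists_eventuallyEq_const_of_forall_separating (l := ae P) (f := f)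
    (MeasurableSet : Set ℝ → Prop) (fun U hU => by
    set B := ⋂ z : Zd d, τ z ⁻¹' (f ⁻¹' U) with hB
    have hBm : MeasurableSet B :=
      MeasurableSet.iInter fun z => (hτ z).measurable (hfm hU)
    have hBinv : ∀ z, τ z ⁻¹' B = B := by
      intro z
      ext ω
      simp only [hB, mem_preimage, mem_iInter]
      constructor
      · intro h w
        have := h (w - z)
        rwa [← Function.comp_apply (f := τ (w - z)), ← hτadd, sub_add_cancel] at this
      · intro h w
        rw [← Function.comp_apply (f := τ w), ← hτadd]
        exact h _
    have hae : ∀ᵐ ω ∂P, ω ∈ B ↔ f ω ∈ U := by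
      filter_upwards [ae_all_iff.2 hall] with ω hω
      simp only [hB, mem_iInter, mem_preimage]
      constructor
      · intro h
        simpa [hτ0] using h 0
      · intro h z
        have := hω z
        simp only [Function.comp_apply] at this
        rwa [this]
    rcases hτerg B hBm hBinv with h | h
    · right
      have : ∀ᵐ ω ∂P, ω ∉ B := measure_eq_zero_iff_ae_notMem.1 h
      filter_upwards [this, hae] with ω h1 h2
      rwa [h2] at h1
    · left
      have : ∀ᵐ ω ∂P, ω ∈ B := (mem_ae_iff_prob_eq_one hBm).2 h
      filter_upwards [this, hae] with ω h1 h2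
      rwa [h2] at h1)
  exact ⟨c, hc⟩

theorem ergodic_L2 (P : Measure Ω) [IsProbabilityMeasure P] (τ : Zd d → Ω → Ω)
    (hτ0 : τ 0 = id)
    (hτadd : ∀ x y : Zd d, τ (x + y) = τ x ∘ τ y)
    (hτ : ∀ z, MeasurePreserving (τ z) P P)
    (hτerg : ∀ B : Set Ω, MeasurableSet B → (∀ z : Zd d, τ z ⁻¹' B = B) → P B = 0 ∨ P B = 1)
    (x : Lp ℝ 2 P) : ∀ᵐ ω ∂P, Good P τ x ω := by
  have hintegr : ∀ x : Lp ℝ 2 P, Integrable x P := fun x => 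
    (Lp.memLp x).integrable (by norm_num)
  have hmeas : ∀ x : Lp ℝ 2 P, Measurable x := fun x => (Lp.stronglyMeasurable x).measurable
  let S : Submodule ℝ (Lp ℝ 2 P) :=
    { carrier := {x | ∀ᵐ ω ∂P, Good P τ x ω}
      zero_mem' := by
        refine Good.congr hτ (Lp.coeFn_zero ℝ 2 P).symm (ae_of_all _ fun ω => ?_)
        exact Good.const 0
      add_mem' := by
        intro x y hx hy
        refine Good.congr hτ (Lp.coeFn_add x y).symm ?_
        filter_upwards [hx, hy] with ω h1 h2
        exact Good.add (hintegr x) (hintegr y) h1 h2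
      smul_mem' := by
        intro c x hx
        refine Good.congr hτ (Lp.coeFn_smul c x).symm ?_
        filter_upwards [hx] with ω h1
        exact Good.smul c h1 }
  have hclosed : S.topologicalClosure ≤ S := by
    intro x hx
    change ∀ᵐ ω ∂P, Good P τ x ω
    refine good_closed P τ hτadd hτ x (hmeas x) (hintegr x) fun ε hε => ?_
    have hx' : x ∈ closure (S : Set (Lp ℝ 2 P)) := hx
    obtain ⟨y, hy, hxy⟩ := Metric.mem_closure_iff.1 hx' ε hε
    refine ⟨y, hmeas y, hintegr y, ?_, hy⟩
    have h1 : ENNReal.ofReal (∫ ω, |x ω - y ω| ∂P) = eLpNorm (⇑x - ⇑y) 1 P := by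
      rw [eLpNorm_one_eq_lintegral_enorm, 
        ← ofReal_integral_norm_eq_lintegral_enorm ((hintegr x).sub (hintegr y))]
      rfl
    have h2 : eLpNorm (⇑x - ⇑y) 1 P ≤ eLpNorm (⇑x - ⇑y) 2 P :=
      eLpNorm_le_eLpNorm_of_exponent_le (by norm_num) 
        ((hintegr x).sub (hintegr y)).aestronglyMeasurable
    have h3 : eLpNorm (⇑x - ⇑y) 2 P = ENNReal.ofReal (dist x y) := by
      rw [← Lp.edist_def, edist_dist]
    rw [h3, ← h1] at h2
    exact ((ENNReal.ofReal_le_ofReal_iff dist_nonneg).1 h2).trans hxy.le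
  have htop : S.topologicalClosure = ⊤ := by
    rw [Submodule.topologicalClosure_eq_top_iff, Submodule.eq_bot_iff]
    intro x hx
    rw [Submodule.mem_orthogonal] at hx
    have hinv : ∀ i, x ∘ τ (stdb i) =ᵐ[P] x := by
      intro i
      set U := Lp.compMeasurePreservingₗᵢ (E := ℝ) (p := 2) ℝ (τ (stdb i)) (hτ (stdb i)) with hU
      have hUx : U x =ᵐ[P] x ∘ τ (stdb i) := Lp.coeFn_compMeasurePreserving x (hτ (stdb i))
      have hmem : U x - x ∈ S := by
        change ∀ᵐ ω ∂P, Good P τ (U x - x : Lp ℝ 2 P) ω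
        refine Good.congr hτ ?_ (good_cobdd P τ hτadd hτ i x (hmeas x) (hintegr x))
        refine EventuallyEq.symm ((Lp.coeFn_sub _ _).trans ?_)
        exact hUx.sub (EventuallyEq.refl _ _)
      have h1 := hx _ hmem
      rw [inner_sub_left, real_inner_self_eq_norm_sq] at h1
      have h2 : ‖U x - x‖ ^ 2 = 0 := by
        rw [norm_sub_sq_real, U.norm_map]
        linarith
      have h3 : U x = x := by
        rw [← sub_eq_zero, ← norm_eq_zero]
        exact pow_eq_zero_iff (two_ne_zero) |>.1 h2
      rw [h3] at hUx
      exact hUx.symm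
    obtain ⟨c, hc⟩ := invariant_const P τ hτ0 hτadd hτ hτerg x (hmeas x) hinv
    have h1mem : Lp.const 2 P (1 : ℝ) ∈ S := by
      change ∀ᵐ ω ∂P, Good P τ (Lp.const 2 P (1 : ℝ)) ω
      exact Good.congr hτ (Lp.coeFn_const 2 P (1 : ℝ)).symm (ae_of_all _ fun ω => Good.const 1)
    have h2 := hx _ h1mem
    rw [L2.inner_def] at h2
    have h3 : ∫ ω, inner ℝ ((Lp.const 2 P (1 : ℝ)) ω) (x ω) ∂P = ∫ ω, c ∂P := by
      refine integral_congr_ae ?_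
      filter_upwards [hc, Lp.coeFn_const 2 P (1 : ℝ)] with ω e1 e2
      rw [e1, e2]
      simp
    rw [h3] at h2
    have hc0 : c = 0 := by simpa using h2
    rw [Lp.eq_zero_iff_ae_eq_zero]
    subst hc0
    exact hc
  have : x ∈ S := hclosed (htop ▸ Submodule.mem_top)
  exact this

theorem ergodic_L1 (P : Measure Ω) [IsProbabilityMeasure P] (τ : Zd d → Ω → Ω)
    (hτ0 : τ 0 = id)
    (hτadd : ∀ x y : Zd d, τ (x + y) = τ x ∘ τ y)
    (hτ : ∀ z, MeasurePreserving (τ z) P P)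
    (hτerg : ∀ B : Set Ω, MeasurableSet B → (∀ z : Zd d, τ z ⁻¹' B = B) → P B = 0 ∨ P B = 1)
    (f : Ω → ℝ) (hfm : Measurable f) (hfi : Integrable f P) : ∀ᵐ ω ∂P, Good P τ f ω := by
  refine good_closed P τ hτadd hτ f hfm hfi fun ε hε => ?_
  obtain ⟨g, hg, hgm⟩ := (memLp_one_iff_integrable.2 hfi).exists_simpleFunc_eLpNorm_sub_lt
    (by simp) (ε := ENNReal.ofReal ε) (by simpa using hε)
  have hgi : Integrable g P := memLp_one_iff_integrable.1 hgm
  have hg2 : MemLp g 2 P := g.memLp_of_isFiniteMeasure 2 P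
  refine ⟨g, g.measurable, hgi, ?_, ?_⟩
  · have : eLpNorm (f - ⇑g) 1 P = ENNReal.ofReal (∫ ω, |f ω - g ω| ∂P) := by
      rw [eLpNorm_one_eq_lintegral_enorm, ← ofReal_integral_norm_eq_lintegral_enorm (hfi.sub hgi)]
      rfl
    rw [this] at hg
    exact ((ENNReal.ofReal_lt_ofReal_iff (by positivity)).1 hg).le
  · exact Good.congr hτ hg2.coeFn_toLp (ergodic_L2 P τ hτ0 hτadd hτ hτerg (hg2.toLp g))


/-- Translate of a set by a lattice vector. -/
def shiftS (z : Zd d) (A : Set (Rd d)) : Set (Rd d) := {x | x - toRd z ∈ A}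

@[simp] lemma toRd_apply (z : Zd d) (i : Fin d) : toRd z i = (z i : ℝ) := rfl

lemma toRd_add (x y : Zd d) : toRd (x + y) = toRd x + toRd y := by
  ext i; simp

lemma toRd_sub (x y : Zd d) : toRd (x - y) = toRd x - toRd y := by
  ext i; simp

/-- The properties of `m_F` which are used in the proof of the ergodic limit. -/
structure Proc (P : Measure Ω) (τ : Zd d → Ω → Ω) (m : Ω → Set (Rd d) → ℝ) (h : Ω → ℝ) :
    Prop where
  nonneg : ∀ ω A, 0 ≤ m ω A
  h_nonneg : ∀ ω, 0 ≤ h ω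
  h_meas : Measurable h
  h_int : Integrable h P
  meas : ∀ A : Set (Rd d), {z : Zd d | toRd z ∈ A}.Finite → Measurable fun ω => m ω A
  sub : ∀ (ω : Ω) (ι : Type) (s : Finset ι) (A : ι → Set (Rd d)) (B : Set (Rd d))
    (U : Finset (Zd d)), {z : Zd d | toRd z ∈ B}.Finite → (∀ i ∈ s, A i ⊆ B) →
    ((s : Set ι).PairwiseDisjoint A) →
    (∀ z : Zd d, toRd z ∈ B → z ∈ U ∨ ∃ i ∈ s, toRd z ∈ A i) →
    m ω B ≤ ∑ i ∈ s, m ω (A i) + ∑ z ∈ U, h (τ z ω)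
  shift : ∀ (ω : Ω) (z : Zd d) (A : Set (Rd d)), m ω (shiftS z A) ≤ m (τ z ω) A

lemma mem_shift_cube {x : Zd d} {k : ℕ} {p : Rd d} :
    p ∈ shiftS x (cube d k) ↔ ∀ i, (x i : ℝ) ≤ p i ∧ p i < x i + k := by
  simp only [shiftS, cube, Set.mem_ofPred_eq, PiLp.sub_apply, toRd_apply]
  refine forall_congr' fun i => ?_
  constructor <;> rintro ⟨h1, h2⟩ <;> constructor <;> linarith

lemma finite_lattice_of_subset_closedBox {A : Set (Rd d)} {a b : Fin d → ℝ}
    (h : A ⊆ closedBox a b) : {z : Zd d | toRd z ∈ A}.Finite := by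
  refine (lat a b 1).finite_toSet.subset fun z hz => ?_
  have := h hz
  rw [Finset.mem_coe, mem_lat]
  intro i
  simpa using this i

/-- Averaged covering inequality. -/
lemma Proc.key {P : Measure Ω} {τ : Zd d → Ω → Ω} {m : Ω → Set (Rd d) → ℝ} {h : Ω → ℝ}
    (H : Proc P τ m h) (ω : Ω) (k : ℕ) (hk : 0 < k) (A B : Set (Rd d)) (hAB : A ⊆ B)
    (hB : {z : Zd d | toRd z ∈ B}.Finite) (T U : Finset (Zd d))
    (hT : ∀ x, shiftS x (cube d k) ⊆ B \ A → x ∈ T)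
    (hU : ∀ z, toRd z ∈ B \ A → z ∉ U → ∀ x, toRd z ∈ shiftS x (cube d k) →
      shiftS x (cube d k) ⊆ B \ A) :
    m ω B ≤ m ω A + ((k : ℝ) ^ d)⁻¹ * ∑ x ∈ T, m (τ x ω) (cube d k) + ∑ z ∈ U, h (τ z ω) := by
  set O : Finset (Zd d) := Finset.Icc (fun _ => 0) (fun _ => (k : ℤ) - 1) with hO
  set T' := T.filter (fun x => shiftS x (cube d k) ⊆ B \ A) with hT'
  set g : Zd d → Zd d := fun x i => x i % k with hg
  have hk' : (0 : ℤ) < k := by exact_mod_cast hk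
  have hcardO : O.card = k ^ d := by
    simp [hO, Pi.card_Icc]
  have hone : ∀ y ∈ O, m ω B ≤ m ω A + ∑ x ∈ T' with g x = y, m (τ x ω) (cube d k)
      + ∑ z ∈ U, h (τ z ω) := by
    intro y hy
    set Ty := T'.filter (fun x => g x = y) with hTy
    have hy' : ∀ i, y i % k = y i := by
      intro i
      rw [hO, Finset.mem_Icc] at hy
      have h1 := hy.1 i
      have h2 := hy.2 i
      simp only at h1 h2
      exact Int.emod_eq_of_lt h1 (by omega)
    have hs := H.sub ω (Option (Zd d)) (Finset.insertNone Ty)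
      (fun o => o.elim A (fun x => shiftS x (cube d k))) B U hB ?_ ?_ ?_
    · rw [Finset.sum_insertNone] at hs
      simp only [Option.elim] at hs
      refine hs.trans ?_
      gcongr with x hx
      exact H.shift ω x _
    · intro o ho
      cases o with
      | none => exact hAB
      | some x =>
        have hx : x ∈ Ty := by simpa using ho
        exact (Finset.mem_filter.1 (Finset.mem_filter.1 hx).1).2.trans sdiff_subset
    · intro o ho o' ho' hne
      have hcell : ∀ x, some x ∈ Finset.insertNone Ty → shiftS x (cube d k) ⊆ B \ A := by
        intro x hx
        have hx : x ∈ Ty := by simpa using hx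
        exact (Finset.mem_filter.1 (Finset.mem_filter.1 hx).1).2
      cases o with
      | none =>
        cases o' with
        | none => exact absurd rfl hne
        | some x' =>
          simp only [Function.onFun, Option.elim]
          rw [Set.disjoint_left]
          intro p hp hp'
          exact (hcell x' ho' hp').2 hp
      | some x =>
        cases o' with
        | none =>
          simp only [Function.onFun, Option.elim]
          rw [Set.disjoint_left]
          intro p hp hp'
          exact (hcell x ho hp).2 hp'
        | some x' =>
          simp only [Function.onFun, Option.elim]
          rw [Set.disjoint_left]
          intro p hp hp'
          apply hne
          congr 1
          have hx : x ∈ Ty := by simpa using ho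
          have hx' : x' ∈ Ty := by simpa using ho'
          have e1 := (Finset.mem_filter.1 hx).2
          have e2 := (Finset.mem_filter.1 hx').2
          rw [mem_shift_cube] at hp hp'
          funext i
          have e3 : x i % k = x' i % k := congrFun (e1.trans e2.symm) i
          have l1 : (x i : ℝ) < x' i + k := (hp i).1.trans_lt (hp' i).2
          have l2 : (x' i : ℝ) < x i + k := (hp' i).1.trans_lt (hp i).2
          have l1' : x i < x' i + k := by exact_mod_cast l1
          have l2' : x' i < x i + k := by exact_mod_cast l2
          have e4 : (k : ℤ) ∣ x' i - x i := Int.ModEq.dvd e3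
          have e5 := Int.eq_zero_of_abs_lt_dvd e4 (by rw [abs_lt]; constructor <;> omega)
          omega
    · intro z hz
      by_cases hzU : z ∈ U
      · exact Or.inl hzU
      right
      by_cases hzA : toRd z ∈ A
      · exact ⟨none, by simp, hzA⟩
      set x : Zd d := fun i => z i - (z i - y i) % k with hx
      have hzx : toRd z ∈ shiftS x (cube d k) := by
        rw [mem_shift_cube]
        intro i
        have h1 := Int.emod_nonneg (z i - y i) hk'.ne'
        have h2 := Int.emod_lt_of_pos (z i - y i) hk'
        simp only [toRd_apply, hx]
        constructor
        · exact_mod_cast (by omega : z i - (z i - y i) % k ≤ z i)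
        · exact_mod_cast (by omega : z i < z i - (z i - y i) % k + k)
      have hsub := hU z ⟨hz, hzA⟩ hzU x hzx
      refine ⟨some x, ?_, hzx⟩
      rw [Finset.some_mem_insertNone, hTy, Finset.mem_filter, hT', Finset.mem_filter]
      refine ⟨⟨hT x hsub, hsub⟩, ?_⟩
      funext i
      rw [← hy' i]
      simp only [hg, hx]
      rw [Int.sub_emod, Int.emod_emod, ← Int.sub_emod, sub_sub_cancel]
  have hsum := Finset.sum_le_sum hone
  rw [Finset.sum_add_distrib, Finset.sum_add_distrib, Finset.sum_const, Finset.sum_const,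
    Finset.sum_const, hcardO, Finset.sum_fiberwise_of_maps_to (g := g) (t := O) ?_] at hsum
  · have hTT : ∑ x ∈ T', m (τ x ω) (cube d k) ≤ ∑ x ∈ T, m (τ x ω) (cube d k) :=
      Finset.sum_le_sum_of_subset_of_nonneg (Finset.filter_subset _ _) fun _ _ _ => H.nonneg _ _
    simp only [nsmul_eq_mul] at hsum
    push_cast at hsum
    have hkd : (0 : ℝ) < (k : ℝ) ^ d := by positivity
    have := hsum.trans (add_le_add_left (add_le_add_right hTT _) _)
    rw [← mul_le_mul_iff_right₀ hkd]
    calc _ ≤ _ := this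
      _ = _ := by field_simp
  · intro x _
    simp only [hO, Finset.mem_Icc, Pi.le_def, hg]
    constructor
    · intro i; exact Int.emod_nonneg _ hk'.ne'
    · intro i
      have := Int.emod_lt_of_pos (x i) hk'
      omega


/-- The normalized expectation. -/
def wk (P : Measure Ω) (m : Ω → Set (Rd d) → ℝ) (k : ℕ) : ℝ :=
  ((k : ℝ) ^ d)⁻¹ * ∫ ω, m ω (cube d k) ∂P

/-- The infimum of the normalized expectations. -/
def Wc (P : Measure Ω) (m : Ω → Set (Rd d) → ℝ) : ℝ := ⨅ k : {k : ℕ // 0 < k}, wk P m k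

lemma finite_cube (k : ℕ) : {z : Zd d | toRd z ∈ cube d k}.Finite :=
  finite_lattice_of_subset_closedBox (a := fun _ => 0) (b := fun _ => k)
    fun _ hx i => ⟨(hx i).1, (hx i).2.le⟩

lemma integrable_shift {P : Measure Ω} {τ : Zd d → Ω → Ω} (hτ : ∀ z, MeasurePreserving (τ z) P P)
    {f : Ω → ℝ} (hf : Integrable f P) (z : Zd d) : Integrable (fun ω => f (τ z ω)) P :=
  ((hτ z).integrable_comp hf.aestronglyMeasurable).2 hf

lemma integral_shift {P : Measure Ω} {τ : Zd d → Ω → Ω} (hτ : ∀ z, MeasurePreserving (τ z) P P)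
    {f : Ω → ℝ} (hf : Integrable f P) (z : Zd d) : ∫ ω, f (τ z ω) ∂P = ∫ ω, f ω ∂P := by
  rw [← integral_map (hτ z).measurable.aemeasurable
      (by rw [(hτ z).map_eq]; exact hf.aestronglyMeasurable), (hτ z).map_eq]

section
variable {P : Measure Ω} {τ : Zd d → Ω → Ω} {m : Ω → Set (Rd d) → ℝ} {h : Ω → ℝ}

lemma Proc.le_sum (H : Proc P τ m h) (ω : Ω) (A : Set (Rd d)) (U : Finset (Zd d))
    (hU : ∀ z, toRd z ∈ A ↔ z ∈ U) : m ω A ≤ ∑ z ∈ U, h (τ z ω) := by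
  have := H.sub ω (Fin 0) ∅ (fun _ => ∅) A U (U.finite_toSet.subset fun z hz => (hU z).1 hz)
    (by simp) (by simp) (fun z hz => Or.inl ((hU z).1 hz))
  simpa using this

lemma Proc.int (H : Proc P τ m h) (hτ : ∀ z, MeasurePreserving (τ z) P P) (A : Set (Rd d))
    (hA : {z : Zd d | toRd z ∈ A}.Finite) : Integrable (fun ω => m ω A) P := by
  have hi : Integrable (fun ω => ∑ z ∈ hA.toFinset, h (τ z ω)) P :=
    integrable_finsetSum _ fun z _ => integrable_shift hτ H.h_int z
  refine hi.mono' (H.meas A hA).aestronglyMeasurable (ae_of_all _ fun ω => ?_)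
  rw [Real.norm_eq_abs, abs_of_nonneg (H.nonneg _ _)]
  exact H.le_sum ω A _ fun z => by simp

lemma Proc.int_cube (H : Proc P τ m h) (hτ : ∀ z, MeasurePreserving (τ z) P P) (k : ℕ) :
    Integrable (fun ω => m ω (cube d k)) P := H.int hτ _ (finite_cube k)

lemma Proc.wk_nonneg (H : Proc P τ m h) (k : ℕ) : 0 ≤ wk P m k :=
  mul_nonneg (by positivity) (integral_nonneg fun ω => H.nonneg _ _)

lemma Proc.Wc_le (H : Proc P τ m h) (k : ℕ) (hk : 0 < k) : Wc P m ≤ wk P m k :=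
  ciInf_le (f := fun k : {k : ℕ // 0 < k} => wk P m k)
    ⟨0, by rintro _ ⟨k, rfl⟩; exact H.wk_nonneg k⟩ ⟨k, hk⟩

lemma Proc.Wc_nonneg (H : Proc P τ m h) : 0 ≤ Wc P m := by
  have : Nonempty {k : ℕ // 0 < k} := ⟨⟨1, one_pos⟩⟩
  exact le_ciInf fun k => H.wk_nonneg k

lemma Proc.exists_wk_lt (_H : Proc P τ m h) (ε : ℝ) (hε : 0 < ε) :
    ∃ k : ℕ, 0 < k ∧ wk P m k < Wc P m + ε := by
  have : Nonempty {k : ℕ // 0 < k} := ⟨⟨1, one_pos⟩⟩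
  obtain ⟨k, hk⟩ := exists_lt_of_ciInf_lt (show Wc P m < Wc P m + ε by linarith)
  exact ⟨k, k.2, hk⟩

/-- The set of typical points. -/
def GoodAll (P : Measure Ω) (τ : Zd d → Ω → Ω) (m : Ω → Set (Rd d) → ℝ) (h : Ω → ℝ)
    (ω : Ω) : Prop :=
  Good P τ h ω ∧ ∀ k : ℕ, Good P τ (fun ω => m ω (cube d k)) ω

lemma Proc.ae_goodAll [IsProbabilityMeasure P] (H : Proc P τ m h) (hτ0 : τ 0 = id)
    (hτadd : ∀ x y : Zd d, τ (x + y) = τ x ∘ τ y)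
    (hτ : ∀ z, MeasurePreserving (τ z) P P)
    (hτerg : ∀ B : Set Ω, MeasurableSet B → (∀ z : Zd d, τ z ⁻¹' B = B) → P B = 0 ∨ P B = 1) :
    ∀ᵐ ω ∂P, GoodAll P τ m h ω := by
  have h1 := ergodic_L1 P τ hτ0 hτadd hτ hτerg h H.h_meas H.h_int
  have h2 : ∀ᵐ ω ∂P, ∀ k : ℕ, Good P τ (fun ω => m ω (cube d k)) ω :=
    ae_all_iff.2 fun k => ergodic_L1 P τ hτ0 hτadd hτ hτerg _ (H.meas _ (finite_cube k))
      (H.int_cube hτ k)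
  filter_upwards [h1, h2] with ω a b using ⟨a, b⟩

lemma Proc.upper (H : Proc P τ m h) (ω : Ω)
    (hω : GoodAll P τ m h ω) (a b : Fin d → ℝ) (hab : ∀ i, a i < b i) (ε : ℝ) (hε : 0 < ε) :
    ∀ᶠ t : ℝ in atTop, ∀ B : Set (Rd d),
      openBox (fun i => t * a i) (fun i => t * b i) ⊆ B →
      B ⊆ closedBox (fun i => t * a i) (fun i => t * b i) →
      m ω B ≤ t ^ d * ((∏ i, (b i - a i)) * Wc P m + ε) := by
  set vQ := ∏ i, (b i - a i) with hvQ
  have hvQ0 : 0 < vQ := Finset.prod_pos fun i _ => by linarith [hab i]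
  obtain ⟨k, hk, hwk⟩ := H.exists_wk_lt (ε / 2 / vQ) (by positivity)
  -- choice of η
  have hcont : Tendsto (fun η : ℝ => vQ * wk P m k +
      (vQ - ∏ i, ((b i - η) - (a i + η))) * ∫ ω, h ω ∂P) (𝓝[>] 0)
      (𝓝 (vQ * wk P m k + (vQ - ∏ i, ((b i - 0) - (a i + 0))) * ∫ ω, h ω ∂P)) := by
    refine Tendsto.mono_left ?_ nhdsWithin_le_nhds
    exact (Continuous.tendsto (by fun_prop) (0 : ℝ))
  have hlt : vQ * wk P m k + (vQ - ∏ i, ((b i - 0) - (a i + 0))) * ∫ ω, h ω ∂P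
      < vQ * Wc P m + ε := by
    simp only [sub_zero, add_zero, ← hvQ, sub_self, zero_mul]
    have : vQ * wk P m k < vQ * (Wc P m + ε / 2 / vQ) := by gcongr
    have e : vQ * (Wc P m + ε / 2 / vQ) = vQ * Wc P m + ε / 2 := by field_simp
    linarith
  have hηsmall : ∀ᶠ η : ℝ in 𝓝[>] 0, ∀ i, a i + η < b i - η := by
    rw [eventually_all]
    intro i
    refine Filter.Eventually.filter_mono nhdsWithin_le_nhds ?_
    have : Tendsto (fun η : ℝ => (b i - η) - (a i + η)) (𝓝 0) (𝓝 ((b i - 0) - (a i + 0))) :=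
      Continuous.tendsto (by fun_prop) (0 : ℝ)
    filter_upwards [this.eventually (lt_mem_nhds (show (0 : ℝ) < (b i - 0) - (a i + 0) by
      linarith [hab i]))] with η hη
    linarith
  obtain ⟨η, hη1, hη2, hη0⟩ := ((hcont.eventually (gt_mem_nhds hlt)).and
    (hηsmall.and self_mem_nhdsWithin)).exists
  have hη0 : 0 < η := hη0
  have hlim : Tendsto (fun t : ℝ => ((k : ℝ) ^ d)⁻¹ * ((t ^ d)⁻¹ * ∑ x ∈ lat a b t, m (τ x ω) (cube d k))
      + ((t ^ d)⁻¹ * ∑ z ∈ lat a b t, h (τ z ω)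
        - (t ^ d)⁻¹ * ∑ z ∈ lat (fun i => a i + η) (fun i => b i - η) t, h (τ z ω))) atTop
      (𝓝 (vQ * wk P m k + (vQ - ∏ i, ((b i - η) - (a i + η))) * ∫ ω, h ω ∂P)) := by
    have h1 := (hω.2 k a b hab).const_mul ((k : ℝ) ^ d)⁻¹
    have h2 := (hω.1 a b hab).sub (hω.1 (fun i => a i + η) (fun i => b i - η) hη2)
    convert h1.add h2 using 2
    rw [wk]; ring
  filter_upwards [hlim.eventually (gt_mem_nhds hη1), eventually_gt_atTop 0,
    eventually_ge_atTop (k / η)] with t ht ht0 htk B hB1 hB2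
  have htk' : (k : ℝ) ≤ t * η := by rwa [div_le_iff₀ hη0] at htk
  have hsub : lat (fun i => a i + η) (fun i => b i - η) t ⊆ lat a b t := by
    intro z hz
    rw [mem_lat] at hz ⊢
    intro i
    have := hz i
    constructor <;> nlinarith
  have hBlat : ∀ z, toRd z ∈ B → z ∈ lat a b t := fun z hz => by
    rw [mem_lat]; exact fun i => hB2 hz i
  have hkey := H.key ω k hk ∅ B (empty_subset _) (finite_lattice_of_subset_closedBox hB2)
    (lat a b t) (lat a b t \ lat (fun i => a i + η) (fun i => b i - η) t) ?_ ?_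
  · have h0 : m ω ∅ ≤ 0 := by simpa using H.le_sum ω ∅ ∅ (by simp)
    rw [Finset.sum_sdiff_eq_sub hsub] at hkey
    have htd : 0 < t ^ d := by positivity
    have h3 : m ω B ≤ t ^ d * (((k : ℝ) ^ d)⁻¹ * ((t ^ d)⁻¹ * ∑ x ∈ lat a b t, m (τ x ω) (cube d k))
      + ((t ^ d)⁻¹ * ∑ z ∈ lat a b t, h (τ z ω)
        - (t ^ d)⁻¹ * ∑ z ∈ lat (fun i => a i + η) (fun i => b i - η) t, h (τ z ω))) := by
      have e : t ^ d * (((k : ℝ) ^ d)⁻¹ * ((t ^ d)⁻¹ * ∑ x ∈ lat a b t, m (τ x ω) (cube d k))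
        + ((t ^ d)⁻¹ * ∑ z ∈ lat a b t, h (τ z ω)
        - (t ^ d)⁻¹ * ∑ z ∈ lat (fun i => a i + η) (fun i => b i - η) t, h (τ z ω)))
        = ((k : ℝ) ^ d)⁻¹ * ∑ x ∈ lat a b t, m (τ x ω) (cube d k)
        + (∑ z ∈ lat a b t, h (τ z ω)
        - ∑ z ∈ lat (fun i => a i + η) (fun i => b i - η) t, h (τ z ω)) := by
        have : t ^ d ≠ 0 := htd.ne'
        generalize ∑ x ∈ lat a b t, m (τ x ω) (cube d k) = X1
        generalize ∑ z ∈ lat a b t, h (τ z ω) = X2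
        generalize ∑ z ∈ lat (fun i => a i + η) (fun i => b i - η) t, h (τ z ω) = X3
        generalize ((k : ℝ) ^ d)⁻¹ = K
        field_simp
      rw [e]
      linarith
    exact h3.trans (by gcongr)
  · intro x hx
    have hxx : toRd x ∈ shiftS x (cube d k) := by
      rw [mem_shift_cube]; intro i; simp [hk]
    exact hBlat x (hx hxx).1
  · intro z hz hzU x hzx p hp
    have hz1 := hBlat z hz.1
    have hz2 : z ∈ lat (fun i => a i + η) (fun i => b i - η) t := by
      by_contra hcon
      exact hzU (Finset.mem_sdiff.2 ⟨hz1, hcon⟩)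
    rw [mem_lat] at hz2
    rw [mem_shift_cube] at hzx hp
    refine ⟨hB1 fun i => ?_, fun h => h⟩
    have q1 := hz2 i
    have q2 := hzx i
    have q3 := hp i
    simp only [toRd_apply] at q2
    constructor <;> nlinarith

/-- Convergence of the positive part in mean. -/
lemma Proc.tendsto_pos [IsProbabilityMeasure P] (H : Proc P τ m h)
    (hτ : ∀ z, MeasurePreserving (τ z) P P) (hgood : ∀ᵐ ω ∂P, GoodAll P τ m h ω) :
    Tendsto (fun N : ℕ => ∫ ω, max (((N : ℝ) ^ d)⁻¹ * m ω (cube d N) - Wc P m) 0 ∂P)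
      atTop (𝓝 0) := by
  set U : ℕ → Finset (Zd d) := fun N => lat (fun _ => 0) (fun _ => 1) (N : ℝ) with hU
  have hUc : ∀ N, (finite_cube (d := d) N).toFinset ⊆ U N := by
    intro N z hz
    simp only [Set.Finite.mem_toFinset, Set.mem_ofPred_eq, cube, toRd_apply] at hz
    rw [hU, mem_lat]
    intro i
    have := hz i
    constructor <;> linarith
  set u : ℕ → Ω → ℝ := fun N ω => max (((N : ℝ) ^ d)⁻¹ * m ω (cube d N) - Wc P m) 0 with hu
  set S : ℕ → Ω → ℝ := fun N ω => ((N : ℝ) ^ d)⁻¹ * ∑ z ∈ U N, h (τ z ω) with hS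
  have hu0 : ∀ N ω, 0 ≤ u N ω := fun N ω => le_max_right _ _
  have huS : ∀ N ω, u N ω ≤ S N ω := by
    intro N ω
    have h1 : m ω (cube d N) ≤ ∑ z ∈ U N, h (τ z ω) :=
      (H.le_sum ω _ (finite_cube (d := d) N).toFinset fun z => by simp).trans
        (Finset.sum_le_sum_of_subset_of_nonneg (hUc N) fun z _ _ => H.h_nonneg _)
    refine max_le ?_ (mul_nonneg (by positivity) (Finset.sum_nonneg fun z _ => H.h_nonneg _))
    have : ((N : ℝ) ^ d)⁻¹ * m ω (cube d N) ≤ S N ω := by simp only [hS]; gcongr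
    linarith [H.Wc_nonneg]
  have hui : ∀ N, Integrable (u N) P := fun N =>
    (((H.int_cube hτ N).const_mul _).sub (integrable_const _)).sup (integrable_const 0)
  have hSi : ∀ N, Integrable (S N) P := fun N =>
    (integrable_finsetSum _ fun z _ => integrable_shift hτ H.h_int z).const_mul _
  have hum : ∀ N, Measurable (u N) := fun N =>
    (((H.meas _ (finite_cube N)).const_mul _).sub_const _).max measurable_const
  have hSm : ∀ N, Measurable (S N) := fun N =>
    (Finset.measurable_fun_sum _ fun z _ => H.h_meas.comp (hτ z).measurable).const_mul _
  have hSval : Tendsto (fun N : ℕ => ∫ ω, S N ω ∂P) atTop (𝓝 (∫ ω, h ω ∂P)) := by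
    have h1 := (tendsto_card_lat (d := d) (fun _ => 0) (fun _ => 1) (fun _ => one_pos)).comp
      (tendsto_natCast_atTop_atTop (R := ℝ))
    have h2 := h1.mul_const (∫ ω, h ω ∂P)
    simp only [sub_zero, Finset.prod_const_one, one_mul] at h2
    refine h2.congr fun N => ?_
    simp only [hS, Function.comp]
    rw [integral_const_mul, integral_finsetSum _ fun z _ => integrable_shift hτ H.h_int z]
    simp_rw [integral_shift hτ H.h_int]
    rw [Finset.sum_const, nsmul_eq_mul]
    ring
  have hS_ae : ∀ᵐ ω ∂P, Tendsto (fun N => S N ω) atTop (𝓝 (∫ ω, h ω ∂P)) := by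
    filter_upwards [hgood] with ω hω
    have h1 := (hω.1 (fun _ => 0) (fun _ => 1) (fun _ => one_pos)).comp
      (tendsto_natCast_atTop_atTop (R := ℝ))
    simp only [sub_zero, Finset.prod_const_one, one_mul] at h1
    exact h1
  have hu_ae : ∀ᵐ ω ∂P, Tendsto (fun N => u N ω) atTop (𝓝 0) := by
    filter_upwards [hgood] with ω hω
    rw [Metric.tendsto_atTop]
    intro ε hε
    have h1 := H.upper ω hω (fun _ => 0) (fun _ => 1) (fun _ => one_pos) (ε / 2) (by positivity)
    have h2 := tendsto_natCast_atTop_atTop (R := ℝ) |>.eventually h1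
    obtain ⟨N0, hN0⟩ := eventually_atTop.1 (h2.and (eventually_gt_atTop 0))
    refine ⟨N0, fun N hN => ?_⟩
    obtain ⟨h3, hNpos⟩ := hN0 N hN
    have h4 := h3 (cube d N) (fun x hx i => by have := hx i; simp at this ⊢; exact ⟨this.1.le, this.2⟩)
      (fun x hx i => by have := hx i; simp at this ⊢; exact ⟨this.1, this.2.le⟩)
    rw [Real.dist_eq, sub_zero, abs_of_nonneg (hu0 _ _)]
    refine lt_of_le_of_lt (max_le ?_ (by positivity : 0 ≤ ε / 2)) (by linarith)
    simp only [sub_zero, Finset.prod_const_one, one_mul] at h4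
    have hNd : (0 : ℝ) < (N : ℝ) ^ d := by positivity
    have : ((N : ℝ) ^ d)⁻¹ * m ω (cube d N) ≤ Wc P m + ε / 2 := by
      rw [inv_mul_le_iff₀ hNd]; exact h4
    linarith
  set c := ∫ ω, h ω ∂P with hc
  have hc0 : 0 ≤ c := integral_nonneg H.h_nonneg
  set w : ℕ → Ω → ℝ := fun N ω => max (c - (S N ω - u N ω)) 0 with hw
  have hwi : ∀ N, Integrable (w N) P := fun N =>
    ((integrable_const _).sub ((hSi N).sub (hui N))).sup (integrable_const 0)
  have hw_lim : Tendsto (fun N => ∫ ω, w N ω ∂P) atTop (𝓝 0) := by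
    have := tendsto_integral_of_dominated_convergence (μ := P) (F := w) (f := fun _ => (0 : ℝ))
      (fun _ => c) (fun N => (hwi N).aestronglyMeasurable) (integrable_const c)
      (fun N => ae_of_all _ fun ω => ?_) ?_
    · simpa using this
    · rw [Real.norm_eq_abs, abs_of_nonneg (le_max_right _ _)]
      exact max_le (by linarith [huS N ω]) hc0
    · filter_upwards [hu_ae, hS_ae] with ω h1 h2
      have h3 := ((tendsto_const_nhds (x := c)).sub (h2.sub h1)).max
        (tendsto_const_nhds (x := (0 : ℝ)))
      simpa using h3
  have hupper : Tendsto (fun N => ∫ ω, S N ω ∂P - c + ∫ ω, w N ω ∂P) atTop (𝓝 0) := by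
    simpa using (hSval.sub_const c).add hw_lim
  refine squeeze_zero (fun N => integral_nonneg (hu0 N)) (fun N => ?_) hupper
  have e : ∫ ω, S N ω ∂P - c + ∫ ω, w N ω ∂P = ∫ ω, (S N ω - c + w N ω) ∂P := by
    have hSc : Integrable (fun ω => S N ω - c) P := (hSi N).sub (integrable_const _)
    rw [integral_add hSc (hwi N), integral_sub (hSi N) (integrable_const _)]
    simp
  rw [e]
  refine integral_mono (hui N) (((hSi N).sub (integrable_const _)).add (hwi N)) fun ω => ?_
  have := le_max_left (c - (S N ω - u N ω)) 0
  simp only [hw]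
  linarith

lemma Proc.tendsto_wk [IsProbabilityMeasure P] (H : Proc P τ m h)
    (hτ : ∀ z, MeasurePreserving (τ z) P P) (hgood : ∀ᵐ ω ∂P, GoodAll P τ m h ω) :
    Tendsto (fun N : ℕ => wk P m N) atTop (𝓝 (Wc P m)) := by
  have h1 := (H.tendsto_pos hτ hgood).const_add (Wc P m)
  rw [add_zero] at h1
  refine tendsto_of_tendsto_of_tendsto_of_le_of_le' tendsto_const_nhds h1 ?_ ?_
  · filter_upwards [eventually_gt_atTop 0] with N hN using H.Wc_le N hN
  · filter_upwards with N
    have hi := (H.int_cube hτ N).const_mul ((N : ℝ) ^ d)⁻¹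
    have h2 : ∫ ω, (((N : ℝ) ^ d)⁻¹ * m ω (cube d N) - Wc P m) ∂P ≤
        ∫ ω, max (((N : ℝ) ^ d)⁻¹ * m ω (cube d N) - Wc P m) 0 ∂P :=
      integral_mono (hi.sub (integrable_const _))
        ((hi.sub (integrable_const _)).sup (integrable_const 0)) fun ω => le_max_left _ _
    rw [integral_sub hi (integrable_const _), integral_const_mul] at h2
    simp only [integral_const, probReal_univ, one_smul] at h2
    rw [wk]
    linarith

/-- Convergence in mean. -/
lemma Proc.tendsto_abs [IsProbabilityMeasure P] (H : Proc P τ m h)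
    (hτ : ∀ z, MeasurePreserving (τ z) P P) (hgood : ∀ᵐ ω ∂P, GoodAll P τ m h ω) :
    Tendsto (fun N : ℕ => ∫ ω, |((N : ℝ) ^ d)⁻¹ * m ω (cube d N) - Wc P m| ∂P)
      atTop (𝓝 0) := by
  have h1 := ((H.tendsto_pos hτ hgood).const_mul 2).sub
    ((H.tendsto_wk hτ hgood).sub_const (Wc P m))
  simp only [mul_zero, sub_self] at h1
  refine h1.congr fun N => ?_
  have hi := (H.int_cube hτ N).const_mul ((N : ℝ) ^ d)⁻¹
  have hi' : Integrable (fun ω => ((N : ℝ) ^ d)⁻¹ * m ω (cube d N) - Wc P m) P :=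
    hi.sub (integrable_const (Wc P m))
  have hi2 : Integrable (fun ω => 2 * max (((N : ℝ) ^ d)⁻¹ * m ω (cube d N) - Wc P m) 0) P :=
    (hi'.sup (integrable_const 0)).const_mul 2
  have e : wk P m N - Wc P m = ∫ ω, (((N : ℝ) ^ d)⁻¹ * m ω (cube d N) - Wc P m) ∂P := by
    rw [integral_sub hi (integrable_const _), integral_const_mul]
    simp [wk]
  rw [e, ← integral_const_mul, ← integral_sub hi2 hi']
  refine integral_congr_ae (ae_of_all _ fun ω => ?_)
  dsimp only
  rcases le_total (((N : ℝ) ^ d)⁻¹ * m ω (cube d N) - Wc P m) 0 with h0 | h0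
  · rw [abs_of_nonpos h0]; simp [h0]
  · rw [abs_of_nonneg h0]; rw [max_eq_left h0]; ring
end


/-- Centered block of `(2r+1)^d` cubes of size `k`. -/
def blk (d k r : ℕ) : Set (Rd d) := {x | ∀ i, -((k : ℝ) * r) ≤ x i ∧ x i < k * (r + 1)}

/-- Index of the cube of size `k` containing a point. -/
def idx (k : ℕ) (p : Rd d) : Zd d := fun i => ⌊p i / (k : ℝ)⌋

lemma blk_zero (d k : ℕ) : blk d k 0 = cube d k := by
  ext x; simp [blk, cube]

lemma mem_shift_blk {k : ℕ} (hk : 0 < k) {r : ℕ} {z : Zd d} {p : Rd d} :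
    p ∈ shiftS ((k : ℤ) • z) (blk d k r) ↔ idx k p ∈ bz z r := by
  have hk' : (0 : ℝ) < k := by exact_mod_cast hk
  simp only [shiftS, blk, Set.mem_ofPred_eq, PiLp.sub_apply, toRd_apply, mem_bz, idx,
    Pi.smul_apply, smul_eq_mul]
  refine forall_congr' fun i => ?_
  rw [Int.le_floor, ← Int.lt_add_one_iff, Int.floor_lt, le_div_iff₀ hk', div_lt_iff₀ hk']
  push_cast
  constructor <;> rintro ⟨h1, h2⟩ <;> constructor <;> nlinarith

lemma mem_blk {k : ℕ} (hk : 0 < k) {r : ℕ} {p : Rd d} :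
    p ∈ blk d k r ↔ idx k p ∈ bz 0 r := by
  rw [← mem_shift_blk hk]
  have : toRd (0 : Zd d) = 0 := by ext i; simp
  simp [shiftS, this]

lemma finite_blk (k r : ℕ) : {z : Zd d | toRd z ∈ blk d k r}.Finite :=
  finite_lattice_of_subset_closedBox (a := fun _ => -((k : ℝ) * r)) (b := fun _ => k * (r + 1))
    fun _ hx i => ⟨(hx i).1, (hx i).2.le⟩

section
variable {P : Measure Ω} {τ : Zd d → Ω → Ω} {m : Ω → Set (Rd d) → ℝ} {h : Ω → ℝ}

lemma Proc.blk_sub (H : Proc P τ m h) {k : ℕ} (hk : 0 < k) (ω : Ω) (N : ℕ) (s : Finset (Zd d))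
    (r : Zd d → ℕ) (hs : ∀ z ∈ s, bz z (r z) ⊆ bz 0 N)
    (hdisj : (s : Set (Zd d)).PairwiseDisjoint fun z => bz z (r z)) :
    m ω (blk d k N) ≤ ∑ z ∈ s, m (τ ((k : ℤ) • z) ω) (blk d k (r z))
      + ∑ w ∈ bz 0 N \ s.biUnion (fun z => bz z (r z)), m (τ ((k : ℤ) • w) ω) (cube d k) := by
  set D := s.biUnion (fun z => bz z (r z)) with hD
  set A : Zd d ⊕ Zd d → Set (Rd d) := Sum.elim (fun z => shiftS ((k : ℤ) • z) (blk d k (r z)))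
    (fun w => shiftS ((k : ℤ) • w) (blk d k 0)) with hA
  have hw0 : ∀ w v : Zd d, v ∈ bz w 0 ↔ v = w := by
    intro w v
    rw [mem_bz, funext_iff]
    refine forall_congr' fun i => ?_
    push_cast
    omega
  have hs' := H.sub ω (Zd d ⊕ Zd d) (s.disjSum (bz 0 N \ D)) A (blk d k N) ∅ (finite_blk k N)
    ?_ ?_ ?_
  · rw [Finset.sum_disjSum] at hs'
    simp only [hA, Sum.elim_inl, Sum.elim_inr, Finset.sum_empty, add_zero, blk_zero] at hs'
    refine hs'.trans ?_
    gcongr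
    · exact H.shift _ _ _
    · exact H.shift _ _ _
  · rintro (z | w) hz p hp
    · rw [Finset.inl_mem_disjSum] at hz
      simp only [hA, Sum.elim_inl, mem_shift_blk hk] at hp
      rw [mem_blk hk]
      exact hs z hz hp
    · rw [Finset.inr_mem_disjSum] at hz
      simp only [hA, Sum.elim_inr, mem_shift_blk hk, hw0] at hp
      rw [mem_blk hk, hp]
      exact (Finset.mem_sdiff.1 hz).1
  · rintro (z | w) hz (z' | w') hz' hne
    · simp only [Finset.mem_coe, Finset.inl_mem_disjSum] at hz hz'
      have hne' : z ≠ z' := fun h => hne (by rw [h])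
      refine Set.disjoint_left.2 fun p hp hp' => ?_
      simp only [hA, Sum.elim_inl, mem_shift_blk hk] at hp hp'
      exact Finset.disjoint_left.1 (hdisj hz hz' hne') hp hp'
    · simp only [Finset.mem_coe, Finset.inl_mem_disjSum, Finset.inr_mem_disjSum] at hz hz'
      refine Set.disjoint_left.2 fun p hp hp' => ?_
      simp only [hA, Sum.elim_inl, Sum.elim_inr, mem_shift_blk hk, hw0] at hp hp'
      rw [hp'] at hp
      exact (Finset.mem_sdiff.1 hz').2 (Finset.mem_biUnion.2 ⟨z, hz, hp⟩)
    · simp only [Finset.mem_coe, Finset.inl_mem_disjSum, Finset.inr_mem_disjSum] at hz hz'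
      refine Set.disjoint_left.2 fun p hp' hp => ?_
      simp only [hA, Sum.elim_inl, Sum.elim_inr, mem_shift_blk hk, hw0] at hp hp'
      rw [hp'] at hp
      exact (Finset.mem_sdiff.1 hz).2 (Finset.mem_biUnion.2 ⟨z', hz', hp⟩)
    · have hne' : w ≠ w' := fun h => hne (by rw [h])
      refine Set.disjoint_left.2 fun p hp hp' => ?_
      simp only [hA, Sum.elim_inr, mem_shift_blk hk, hw0] at hp hp'
      exact hne' (hp ▸ hp')
  · intro z hz
    rw [mem_blk hk] at hz
    right
    by_cases hzD : idx k (toRd z) ∈ D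
    · obtain ⟨y, hy, hzy⟩ := Finset.mem_biUnion.1 hzD
      exact ⟨Sum.inl y, by simpa using hy,
        by simp only [hA, Sum.elim_inl, mem_shift_blk hk]; exact hzy⟩
    · exact ⟨Sum.inr (idx k (toRd z)), Finset.inr_mem_disjSum.2 (Finset.mem_sdiff.2 ⟨hz, hzD⟩),
        by simp only [hA, Sum.elim_inr, mem_shift_blk hk, hw0]⟩

lemma Proc.int_blk_ge (H : Proc P τ m h) (hτ : ∀ z, MeasurePreserving (τ z) P P) {k : ℕ}
    (hk : 0 < k) (r : ℕ) :
    Wc P m * ((k : ℝ) * (2 * r + 1)) ^ d ≤ ∫ ω, m ω (blk d k r) ∂P := by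
  have hcube : cube d (k * (2 * r + 1)) = shiftS (fun _ => (k : ℤ) * r) (blk d k r) := by
    ext p
    simp only [cube, shiftS, blk, Set.mem_ofPred_eq, PiLp.sub_apply, toRd_apply]
    refine forall_congr' fun i => ?_
    push_cast
    constructor <;> rintro ⟨h1, h2⟩ <;> constructor <;> nlinarith
  have h1 : ∫ ω, m ω (cube d (k * (2 * r + 1))) ∂P ≤ ∫ ω, m ω (blk d k r) ∂P := by
    rw [← integral_shift hτ (H.int hτ _ (finite_blk k r)) (fun _ => (k : ℤ) * r)]
    refine integral_mono (H.int_cube hτ _)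
      (integrable_shift hτ (H.int hτ _ (finite_blk k r)) _) fun ω => ?_
    dsimp only
    rw [hcube]
    exact H.shift _ _ _
  have h2 := H.Wc_le (k * (2 * r + 1)) (by positivity)
  rw [wk] at h2
  have h3 : (0 : ℝ) < ((k * (2 * r + 1) : ℕ) : ℝ) ^ d := by
    have : 0 < k * (2 * r + 1) := by positivity
    positivity
  rw [inv_mul_eq_div, le_div_iff₀ h3] at h2
  push_cast at h2
  exact h2.trans h1

/-- Maximal inequality for the blocks. -/
lemma Proc.blk_max [IsProbabilityMeasure P] (H : Proc P τ m h)
    (hτadd : ∀ x y : Zd d, τ (x + y) = τ x ∘ τ y)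
    (hτ : ∀ z, MeasurePreserving (τ z) P P) {k : ℕ} (hk : 0 < k) (δ : ℝ) (hδ : 0 < δ) :
    P {ω | ∃ r : ℕ, δ * ((k : ℝ) * (2 * r + 1)) ^ d <
        Wc P m * ((k : ℝ) * (2 * r + 1)) ^ d - m ω (blk d k r)}
      ≤ ENNReal.ofReal (5 ^ d * (2 * ∫ ω, |((k : ℝ) ^ d)⁻¹ * m ω (cube d k) - Wc P m| ∂P) / δ) := by
  set W := Wc P m with hW
  have hkd : (0 : ℝ) < (k : ℝ) ^ d := by positivity
  set g : Ω → ℝ := fun ω => |((k : ℝ) ^ d)⁻¹ * m ω (cube d k) - W| with hg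
  set q : Ω → ℝ := fun ω => (k : ℝ) ^ d * g ω + m ω (cube d k) with hq
  have hmi := H.int_cube hτ k
  have hmm := H.meas _ (finite_cube k)
  have hgi : Integrable g P := ((hmi.const_mul _).sub (integrable_const _)).abs
  have hgm : Measurable g := ((hmm.const_mul _).sub_const _).abs
  have hqi : Integrable q P := (hgi.const_mul _).add hmi
  have hqm : Measurable q := (hgm.const_mul _).add hmm
  have hqW : ∀ ω, (k : ℝ) ^ d * W ≤ q ω := by
    intro ω
    have h1 : W - ((k : ℝ) ^ d)⁻¹ * m ω (cube d k) ≤ g ω := by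
      simp only [hg]; rw [abs_sub_comm]; exact le_abs_self _
    have h2 : (k : ℝ) ^ d * (W - ((k : ℝ) ^ d)⁻¹ * m ω (cube d k)) ≤ (k : ℝ) ^ d * g ω := by gcongr
    have h3 : (k : ℝ) ^ d * (W - ((k : ℝ) ^ d)⁻¹ * m ω (cube d k))
      = (k : ℝ) ^ d * W - m ω (cube d k) := by field_simp
    simp only [hq]; linarith
  have hqE : ∫ ω, q ω ∂P - (k : ℝ) ^ d * W ≤ (k : ℝ) ^ d * (2 * ∫ ω, g ω ∂P) := by
    have h1 : ∫ ω, q ω ∂P = (k : ℝ) ^ d * ∫ ω, g ω ∂P + ∫ ω, m ω (cube d k) ∂P := by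
      rw [← integral_const_mul, ← integral_add (hgi.const_mul _) hmi]
    have h2 : ∫ ω, m ω (cube d k) ∂P ≤ ∫ ω, ((k : ℝ) ^ d * g ω + (k : ℝ) ^ d * W) ∂P := by
      refine integral_mono hmi ((hgi.const_mul _).add (integrable_const _)) fun ω => ?_
      have h3 : ((k : ℝ) ^ d)⁻¹ * m ω (cube d k) - W ≤ g ω := le_abs_self _
      have h4 : (k : ℝ) ^ d * (((k : ℝ) ^ d)⁻¹ * m ω (cube d k) - W) ≤ (k : ℝ) ^ d * g ω := by gcongr
      have h5 : (k : ℝ) ^ d * (((k : ℝ) ^ d)⁻¹ * m ω (cube d k) - W)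
        = m ω (cube d k) - (k : ℝ) ^ d * W := by field_simp
      dsimp only
      linarith
    rw [integral_add (hgi.const_mul _) (integrable_const _), integral_const_mul] at h2
    simp only [integral_const, probReal_univ, one_smul] at h2
    linarith
  set G : ℕ → Ω → ℝ := fun r ω => ∑ z ∈ bz 0 r, q (τ ((k : ℤ) • z) ω) - m ω (blk d k r) with hG
  have hmq : ∀ ω, m ω (cube d k) ≤ q ω := fun ω => by
    have : 0 ≤ (k : ℝ) ^ d * g ω := mul_nonneg hkd.le (abs_nonneg _)
    simp only [hq]; linarith
  have hsup : ∀ (ω : Ω) (N : ℕ) (s : Finset (Zd d)) (r : Zd d → ℕ),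
      (∀ z ∈ s, bz z (r z) ⊆ bz 0 N) →
      ((s : Set (Zd d)).PairwiseDisjoint fun z => bz z (r z)) →
      ∑ z ∈ s, G (r z) (τ ((k : ℤ) • z) ω) ≤ G N ω := by
    intro ω N s r hs hdisj
    have h1 := H.blk_sub hk ω N s r hs hdisj
    set D := s.biUnion (fun z => bz z (r z)) with hD
    have hDN : D ⊆ bz 0 N := Finset.biUnion_subset.2 hs
    have h2 : ∑ z ∈ s, ∑ w ∈ bz 0 (r z), q (τ ((k : ℤ) • w) (τ ((k : ℤ) • z) ω))
        = ∑ w ∈ D, q (τ ((k : ℤ) • w) ω) := by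
      rw [hD, Finset.sum_biUnion hdisj]
      refine Finset.sum_congr rfl fun z _ => ?_
      refine Finset.sum_bij' (fun w _ => w + z) (fun w _ => w - z) ?_ ?_ ?_ ?_ ?_
      · intro w hw
        rw [mem_bz] at hw ⊢
        intro i; have := hw i; simp only [Pi.zero_apply, Pi.add_apply] at this ⊢; omega
      · intro w hw
        rw [mem_bz] at hw ⊢
        intro i; have := hw i; simp only [Pi.zero_apply, Pi.sub_apply] at this ⊢; omega
      · intro w _; simp
      · intro w _; simp
      · intro w _
        rw [smul_add, hτadd]; rfl
    have h3 : ∑ w ∈ bz 0 N \ D, m (τ ((k : ℤ) • w) ω) (cube d k)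
        ≤ ∑ w ∈ bz 0 N \ D, q (τ ((k : ℤ) • w) ω) := Finset.sum_le_sum fun w _ => hmq _
    have h4 := Finset.sum_sdiff_eq_sub (f := fun w => q (τ ((k : ℤ) • w) ω)) hDN
    simp only [hG]
    rw [Finset.sum_sub_distrib, h2]
    linarith
  have hG0 : ∀ r ω, 0 ≤ G r ω := fun r ω => by
    simpa using hsup ω r ∅ (fun _ => 0) (by simp) (by simp)
  have hGm : ∀ r, Measurable (G r) := fun r =>
    (Finset.measurable_fun_sum _ fun z _ => hqm.comp (hτ _).measurable).sub
      (H.meas _ (finite_blk k r))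
  have hGi1 : ∀ r, Integrable (fun ω => ∑ z ∈ bz 0 r, q (τ ((k : ℤ) • z) ω)) P := fun r =>
    integrable_finsetSum _ fun z _ => integrable_shift hτ hqi _
  have hGi : ∀ r, Integrable (G r) P := fun r => (hGi1 r).sub (H.int hτ _ (finite_blk k r))
  have hγ : ∀ r : ℕ, ∫ ω, G r ω ∂P ≤ (k : ℝ) ^ d * (2 * ∫ ω, g ω ∂P) * (2 * r + 1 : ℝ) ^ d := by
    intro r
    simp only [hG]
    rw [integral_sub (hGi1 r) (H.int hτ _ (finite_blk k r)),
      integral_finsetSum _ fun z _ => integrable_shift hτ hqi _]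
    simp_rw [integral_shift hτ hqi]
    rw [Finset.sum_const, card_bz, nsmul_eq_mul]
    have h1 := H.int_blk_ge hτ hk r
    rw [mul_pow] at h1
    push_cast
    have h2 := mul_le_mul_of_nonneg_right hqE (show (0 : ℝ) ≤ (2 * r + 1 : ℝ) ^ d by positivity)
    nlinarith
  have hmax := maximal_ineq P (fun z => τ ((k : ℤ) • z)) (fun z => hτ _) G hG0 hGm hGi hsup
    _ hγ (δ * (k : ℝ) ^ d) (by positivity)
  have e : 5 ^ d * ((k : ℝ) ^ d * (2 * ∫ ω, g ω ∂P)) / (δ * (k : ℝ) ^ d)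
      = 5 ^ d * (2 * ∫ ω, g ω ∂P) / δ := by
    field_simp
  rw [e] at hmax
  refine (measure_mono ?_).trans hmax
  rintro ω ⟨r, hr⟩
  refine ⟨r, ?_⟩
  have h1 : (2 * r + 1 : ℝ) ^ d * ((k : ℝ) ^ d * W) ≤ ∑ z ∈ bz (0 : Zd d) r, q (τ ((k : ℤ) • z) ω) := by
    have := Finset.card_nsmul_le_sum (bz (0 : Zd d) r) (fun z => q (τ ((k : ℤ) • z) ω)) _
      fun z _ => hqW _
    rw [card_bz, nsmul_eq_mul] at this
    push_cast at this
    exact this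
  rw [mul_pow] at hr
  simp only [hG]
  nlinarith

lemma Proc.ae_blk [IsProbabilityMeasure P] (H : Proc P τ m h)
    (hτadd : ∀ x y : Zd d, τ (x + y) = τ x ∘ τ y)
    (hτ : ∀ z, MeasurePreserving (τ z) P P) (hgood : ∀ᵐ ω ∂P, GoodAll P τ m h ω) :
    ∀ᵐ ω ∂P, ∀ δ : ℝ, 0 < δ → ∃ k : ℕ, 0 < k ∧ ∀ r : ℕ,
      Wc P m * ((k : ℝ) * (2 * r + 1)) ^ d - m ω (blk d k r) ≤ δ * ((k : ℝ) * (2 * r + 1)) ^ d := by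
  have hone : ∀ δ : ℝ, 0 < δ → ∀ᵐ ω ∂P, ∃ k : ℕ, 0 < k ∧ ∀ r : ℕ,
      Wc P m * ((k : ℝ) * (2 * r + 1)) ^ d - m ω (blk d k r) ≤ δ * ((k : ℝ) * (2 * r + 1)) ^ d := by
    intro δ hδ
    rw [ae_iff]
    have hl : Tendsto (fun k : ℕ => ENNReal.ofReal
        (5 ^ d * (2 * ∫ ω, |((k : ℝ) ^ d)⁻¹ * m ω (cube d k) - Wc P m| ∂P) / δ)) atTop (𝓝 0) := by
      have := ENNReal.tendsto_ofReal
        ((((H.tendsto_abs hτ hgood).const_mul 2).const_mul (5 ^ d)).div_const δ)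
      simpa using this
    refine le_antisymm (ge_of_tendsto hl ?_) (by simp)
    filter_upwards [eventually_gt_atTop 0] with k hk
    refine (measure_mono ?_).trans (H.blk_max hτadd hτ hk δ hδ)
    intro ω hω
    simp only [Set.mem_ofPred_eq, not_exists, not_and, not_forall, not_le] at hω
    exact hω k hk
  have hall : ∀ᵐ ω ∂P, ∀ j : ℕ, ∃ k : ℕ, 0 < k ∧ ∀ r : ℕ,
      Wc P m * ((k : ℝ) * (2 * r + 1)) ^ d - m ω (blk d k r)
        ≤ (1 / ((j : ℝ) + 1)) * ((k : ℝ) * (2 * r + 1)) ^ d :=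
    ae_all_iff.2 fun j => hone _ (by positivity)
  filter_upwards [hall] with ω hω δ hδ
  obtain ⟨j, hj⟩ := exists_nat_one_div_lt hδ
  obtain ⟨k, hk, hr⟩ := hω j
  exact ⟨k, hk, fun r => (hr r).trans (by gcongr)⟩
end


section
variable {P : Measure Ω} {τ : Zd d → Ω → Ω} {m : Ω → Set (Rd d) → ℝ} {h : Ω → ℝ}

set_option maxHeartbeats 1000000 in
lemma Proc.lower (H : Proc P τ m h) (ω : Ω)
    (hω : GoodAll P τ m h ω)
    (hblk : ∀ δ : ℝ, 0 < δ → ∃ k : ℕ, 0 < k ∧ ∀ r : ℕ,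
      Wc P m * ((k : ℝ) * (2 * r + 1)) ^ d - m ω (blk d k r) ≤ δ * ((k : ℝ) * (2 * r + 1)) ^ d)
    (a b : Fin d → ℝ) (hab : ∀ i, a i < b i) (ε : ℝ) (hε : 0 < ε) :
    ∀ᶠ t : ℝ in atTop, t ^ d * ((∏ i, (b i - a i)) * Wc P m - ε)
      ≤ m ω (closedBox (fun i => t * a i) (fun i => t * b i)) := by
  set vQ := ∏ i, (b i - a i) with hvQ
  have hvQ0 : 0 < vQ := Finset.prod_pos fun i _ => by linarith [hab i]
  obtain ⟨M0, hM0, hMa, hMb⟩ := exists_bound a b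
  set M := M0 + 1 with hM
  have hMpos : 0 < M := by linarith
  set W := Wc P m with hW
  have hW0 : 0 ≤ W := H.Wc_nonneg
  obtain ⟨k0, hk0, hr0⟩ := hblk (ε / 2 / (2 * (M + 1)) ^ d) (by positivity)
  obtain ⟨k, hk, hwk⟩ := H.exists_wk_lt (ε / 4 / (2 * M) ^ d) (by positivity)
  set c := ∫ ω, h ω ∂P with hc
  have hcont : Tendsto (fun η : ℝ => ((∏ _i : Fin d, ((M + η) - (-M - η))) - vQ) * wk P m k +
      ((∏ _i : Fin d, ((M + η) - (-M - η))) - (∏ _i : Fin d, ((M - η) - (-M + η)))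
        + ((∏ i, ((b i + η) - (a i - η))) - vQ)) * c) (𝓝[>] 0)
      (𝓝 (((∏ _i : Fin d, ((M + 0) - (-M - 0))) - vQ) * wk P m k +
      ((∏ _i : Fin d, ((M + 0) - (-M - 0))) - (∏ _i : Fin d, ((M - 0) - (-M + 0)))
        + ((∏ i, ((b i + 0) - (a i - 0))) - vQ)) * c)) := by
    refine Tendsto.mono_left ?_ nhdsWithin_le_nhds
    exact (Continuous.tendsto (by fun_prop) (0 : ℝ))
  have hlt : ((∏ _i : Fin d, ((M + 0) - (-M - 0))) - vQ) * wk P m k +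
      ((∏ _i : Fin d, ((M + 0) - (-M - 0))) - (∏ _i : Fin d, ((M - 0) - (-M + 0)))
        + ((∏ i, ((b i + 0) - (a i - 0))) - vQ)) * c < ((2 * M) ^ d - vQ) * W + ε / 2 := by
    have e1 : M - -M = 2 * M := by ring
    simp only [sub_zero, add_zero, ← hvQ, sub_self, zero_mul, e1, Finset.prod_const,
      Finset.card_univ, Fintype.card_fin]
    have h1 := H.Wc_le k hk
    have h2 : (2 * M) ^ d * (wk P m k - W) ≤ (2 * M) ^ d * (ε / 4 / (2 * M) ^ d) := by
      gcongr; linarith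
    have e2 : (2 * M) ^ d * (ε / 4 / (2 * M) ^ d) = ε / 4 := by field_simp
    nlinarith
  have hη1' : ∀ᶠ η : ℝ in 𝓝[>] 0, η < 1 :=
    Filter.Eventually.filter_mono nhdsWithin_le_nhds (gt_mem_nhds one_pos)
  obtain ⟨η, hη1, hηlt, hη0⟩ := ((hcont.eventually (gt_mem_nhds hlt)).and
    (hη1'.and self_mem_nhdsWithin)).exists
  have hη0 : 0 < η := hη0
  have hM1 : 1 < M := by linarith
  set Lo : ℝ → Finset (Zd d) := lat (fun _ => -M - η) (fun _ => M + η) with hLo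
  set Li : ℝ → Finset (Zd d) := lat (fun _ => -M + η) (fun _ => M - η) with hLi
  set Qo : ℝ → Finset (Zd d) := lat (fun i => a i - η) (fun i => b i + η) with hQo
  set Q : ℝ → Finset (Zd d) := lat a b with hQ
  have hlim : Tendsto (fun t : ℝ => ((k : ℝ) ^ d)⁻¹ *
        ((t ^ d)⁻¹ * ∑ x ∈ Lo t, m (τ x ω) (cube d k)
          - (t ^ d)⁻¹ * ∑ x ∈ Q t, m (τ x ω) (cube d k))
      + (((t ^ d)⁻¹ * ∑ z ∈ Lo t, h (τ z ω) - (t ^ d)⁻¹ * ∑ z ∈ Li t, h (τ z ω))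
        + ((t ^ d)⁻¹ * ∑ z ∈ Qo t, h (τ z ω) - (t ^ d)⁻¹ * ∑ z ∈ Q t, h (τ z ω)))) atTop
      (𝓝 (((∏ _i : Fin d, ((M + η) - (-M - η))) - vQ) * wk P m k +
      ((∏ _i : Fin d, ((M + η) - (-M - η))) - (∏ _i : Fin d, ((M - η) - (-M + η)))
        + ((∏ i, ((b i + η) - (a i - η))) - vQ)) * c)) := by
    have l1 := (((hω.2 k (fun _ => -M - η) (fun _ => M + η) (fun _ => by linarith)).sub
      (hω.2 k a b hab)).const_mul ((k : ℝ) ^ d)⁻¹)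
    have l2 := (hω.1 (fun _ => -M - η) (fun _ => M + η) (fun _ => by linarith)).sub
      (hω.1 (fun _ => -M + η) (fun _ => M - η) (fun _ => by linarith))
    have l3 := (hω.1 (fun i => a i - η) (fun i => b i + η) (fun i => by linarith [hab i])).sub
      (hω.1 a b hab)
    convert l1.add (l2.add l3) using 2
    rw [wk, ← hvQ, ← hc]; ring
  filter_upwards [hlim.eventually (gt_mem_nhds hη1), eventually_gt_atTop 0,
    eventually_ge_atTop (k / η), eventually_ge_atTop (2 * k0 / η)] with t ht ht0 htk htk0
  have htk' : (k : ℝ) ≤ t * η := by rwa [div_le_iff₀ hη0] at htk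
  have htk0' : 2 * (k0 : ℝ) ≤ t * η := by rwa [div_le_iff₀ hη0] at htk0
  have hk0R : (0 : ℝ) < k0 := by exact_mod_cast hk0
  set r := ⌈t * M / k0⌉₊ with hr
  have hr1 : t * M ≤ k0 * r := by
    have := Nat.le_ceil (t * M / k0)
    rw [div_le_iff₀ hk0R] at this
    linarith
  have hr2 : (k0 : ℝ) * r < t * M + k0 := by
    have := Nat.ceil_lt_add_one (show 0 ≤ t * M / k0 by positivity)
    rw [← hr] at this
    have h2 : (k0 : ℝ) * r < k0 * (t * M / k0 + 1) := by gcongr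
    have h3 : (k0 : ℝ) * (t * M / k0 + 1) = t * M + k0 := by field_simp
    linarith
  have htη : t * η ≤ t := by nlinarith
  have htM : t * M = t * M0 + t := by rw [hM]; ring
  have hexp : (k0 : ℝ) * (r + 1) = k0 * r + k0 := by ring
  have htη0 : 0 < t * η := by positivity
  set A : Set (Rd d) := closedBox (fun i => t * a i) (fun i => t * b i) with hA
  set B := blk d k0 r with hB
  have hAB : A ⊆ B := by
    intro x hx i
    have h1 := hx i
    have h2 := mul_le_mul_of_nonneg_left (hMa i) ht0.le
    have h3 := mul_le_mul_of_nonneg_left (hMb i) ht0.le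
    simp only at h1
    constructor <;> linarith
  have hBLo : ∀ z, toRd z ∈ B → z ∈ Lo t := by
    intro z hz
    rw [hLo, mem_lat]
    intro i
    have h1 := hz i
    simp only [toRd_apply] at h1
    constructor <;> linarith
  have hAQ : ∀ z, toRd z ∈ A ↔ z ∈ Q t := by
    intro z; rw [hQ, mem_lat]; rfl
  have hQLo : Q t ⊆ Lo t := fun z hz => hBLo z (hAB ((hAQ z).2 hz))
  have hLiLo : Li t ⊆ Lo t := by
    intro z hz
    simp only [hLi, hLo, mem_lat] at hz ⊢
    intro i
    have := hz i
    constructor <;> linarith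
  have hQQo : Q t ⊆ Qo t := by
    intro z hz
    simp only [hQ, hQo, mem_lat] at hz ⊢
    intro i
    have := hz i
    constructor <;> linarith
  have hkey := H.key ω k hk A B hAB (finite_blk k0 r) (Lo t \ Q t)
    ((Lo t \ Li t) ∪ (Qo t \ Q t)) ?_ ?_
  · have hun : ∑ z ∈ (Lo t \ Li t) ∪ (Qo t \ Q t), h (τ z ω)
        ≤ ∑ z ∈ Lo t \ Li t, h (τ z ω) + ∑ z ∈ Qo t \ Q t, h (τ z ω) := by
      rw [← Finset.sum_union_inter]
      have : 0 ≤ ∑ z ∈ (Lo t \ Li t) ∩ (Qo t \ Q t), h (τ z ω) :=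
        Finset.sum_nonneg fun z _ => H.h_nonneg _
      linarith
    rw [Finset.sum_sdiff_eq_sub hLiLo, Finset.sum_sdiff_eq_sub hQQo] at hun
    rw [Finset.sum_sdiff_eq_sub hQLo] at hkey
    have htd : 0 < t ^ d := by positivity
    have hX := mul_lt_mul_of_pos_left ht htd
    have e : t ^ d * (((k : ℝ) ^ d)⁻¹ *
        ((t ^ d)⁻¹ * ∑ x ∈ Lo t, m (τ x ω) (cube d k)
          - (t ^ d)⁻¹ * ∑ x ∈ Q t, m (τ x ω) (cube d k))
      + (((t ^ d)⁻¹ * ∑ z ∈ Lo t, h (τ z ω) - (t ^ d)⁻¹ * ∑ z ∈ Li t, h (τ z ω))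
        + ((t ^ d)⁻¹ * ∑ z ∈ Qo t, h (τ z ω) - (t ^ d)⁻¹ * ∑ z ∈ Q t, h (τ z ω))))
        = ((k : ℝ) ^ d)⁻¹ *
        (∑ x ∈ Lo t, m (τ x ω) (cube d k) - ∑ x ∈ Q t, m (τ x ω) (cube d k))
      + ((∑ z ∈ Lo t, h (τ z ω) - ∑ z ∈ Li t, h (τ z ω))
        + (∑ z ∈ Qo t, h (τ z ω) - ∑ z ∈ Q t, h (τ z ω))) := by
      have : t ^ d ≠ 0 := htd.ne'
      generalize ∑ x ∈ Lo t, m (τ x ω) (cube d k) = X1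
      generalize ∑ x ∈ Q t, m (τ x ω) (cube d k) = X2
      generalize ∑ z ∈ Lo t, h (τ z ω) = X3
      generalize ∑ z ∈ Li t, h (τ z ω) = X4
      generalize ∑ z ∈ Qo t, h (τ z ω) = X5
      generalize ∑ z ∈ Q t, h (τ z ω) = X6
      generalize ((k : ℝ) ^ d)⁻¹ = K
      field_simp
    rw [e] at hX
    have hb := hr0 r
    have hs1 : (t * (2 * M)) ^ d ≤ ((k0 : ℝ) * (2 * r + 1)) ^ d := by
      refine pow_le_pow_left₀ (by positivity) ?_ d; linarith
    have hs2 : ((k0 : ℝ) * (2 * r + 1)) ^ d ≤ (t * (2 * (M + 1))) ^ d := by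
      refine pow_le_pow_left₀ (by positivity) ?_ d; linarith
    have hs3 : W * (t ^ d * (2 * M) ^ d) ≤ W * ((k0 : ℝ) * (2 * r + 1)) ^ d := by
      rw [← mul_pow]; gcongr
    have hs4 : ε / 2 / (2 * (M + 1)) ^ d * ((k0 : ℝ) * (2 * r + 1)) ^ d ≤ t ^ d * (ε / 2) := by
      have : ε / 2 / (2 * (M + 1)) ^ d * ((k0 : ℝ) * (2 * r + 1)) ^ d
        ≤ ε / 2 / (2 * (M + 1)) ^ d * (t * (2 * (M + 1))) ^ d := by gcongr
      refine this.trans (le_of_eq ?_)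
      rw [mul_pow t]
      have : (2 * (M + 1)) ^ d ≠ 0 := by positivity
      field_simp
    nlinarith
  · intro x hx
    have hxx : toRd x ∈ shiftS x (cube d k) := by
      rw [mem_shift_cube]; intro i; simp [hk]
    have hx' := hx hxx
    exact Finset.mem_sdiff.2 ⟨hBLo x hx'.1, fun hq => hx'.2 ((hAQ x).2 hq)⟩
  · intro z hz hzU x hzx p hp
    have hz1 := hBLo z hz.1
    simp only [Finset.mem_union, Finset.mem_sdiff, not_or, not_and, not_not] at hzU
    have hz2 := hzU.1 hz1
    have hz3 : z ∉ Qo t := fun hh => hz.2 ((hAQ z).2 (hzU.2 hh))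
    simp only [hLi, mem_lat] at hz2
    rw [mem_shift_cube] at hzx hp
    simp only [toRd_apply] at hzx
    refine ⟨fun i => ?_, fun hpA => hz3 ?_⟩
    · have q1 := hz2 i
      have q2 := hzx i
      have q3 := hp i
      constructor <;> linarith
    · rw [hQo, mem_lat]
      intro i
      have q1 := hpA i
      have q2 := hzx i
      have q3 := hp i
      simp only at q1
      constructor <;> linarith
end


section
set_option linter.unusedSectionVars false
variable {τ : Zd d → Ω → Ω} {E0 : Finset (Zd d)} {V : Zd d → Ω → Rn n → ℝ}

lemma norm_le_irange {b : Zd d} (hb : b ∈ E0) : ‖toRd b‖ ≤ irange d E0 :=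
  (le_csSup ((E0.finite_toSet.image (fun b : Zd d => ‖toRd b‖)).bddAbove)
    ⟨b, hb, rfl⟩).trans (le_max_right _ _)

/-- Local energy at a lattice point. -/
def loc (τ : Zd d → Ω → Ω) (E0 : Finset (Zd d)) (V : Zd d → Ω → Rn n → ℝ) (F : Rd d →L[ℝ] Rn n)
    (ω : Ω) (φ : Zd d → Rn n) (z : Zd d) : ℝ :=
  ∑ b ∈ E0, V b (τ z ω) ((‖toRd b‖)⁻¹ • (F (toRd b) + (φ (z + b) - φ z)))

lemma energy1_eq (ω : Ω) (F : Rd d →L[ℝ] Rn n) (φ : Zd d → Rn n) (A : Set (Rd d)) :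
    energy1 τ E0 V ω (fun z => F (toRd z) + φ z) A
      = ∑' z : Zd d, if toRd z ∈ A then loc τ E0 V F ω φ z else 0 := by
  unfold energy1 loc
  refine tsum_congr fun z => ?_
  congr 1
  refine Finset.sum_congr rfl fun b _ => ?_
  dsimp only
  rw [toRd_add, map_add]
  congr 2
  abel

lemma energy1_eq_sum (ω : Ω) (F : Rd d →L[ℝ] Rn n) (φ : Zd d → Rn n) (A : Set (Rd d))
    (L : Finset (Zd d)) (hL : ∀ z, toRd z ∈ A → z ∈ L) :
    energy1 τ E0 V ω (fun z => F (toRd z) + φ z) A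
      = ∑ z ∈ L, if toRd z ∈ A then loc τ E0 V F ω φ z else 0 := by
  rw [energy1_eq]
  refine tsum_eq_sum fun z hz => ?_
  rw [if_neg fun h => hz (hL z h)]

lemma loc_nonneg (hVnn : ∀ b ∈ E0, ∀ (ω : Ω) (r : Rn n), 0 ≤ V b ω r) (F : Rd d →L[ℝ] Rn n)
    (ω : Ω) (φ : Zd d → Rn n) (z : Zd d) : 0 ≤ loc τ E0 V F ω φ z :=
  Finset.sum_nonneg fun b hb => hVnn b hb _ _

lemma energy1_nonneg (hVnn : ∀ b ∈ E0, ∀ (ω : Ω) (r : Rn n), 0 ≤ V b ω r) (F : Rd d →L[ℝ] Rn n)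
    (ω : Ω) (φ : Zd d → Rn n) (A : Set (Rd d)) :
    0 ≤ energy1 τ E0 V ω (fun z => F (toRd z) + φ z) A := by
  rw [energy1_eq]
  refine tsum_nonneg fun z => ?_
  split_ifs
  · exact loc_nonneg hVnn F ω φ z
  · exact le_rfl

instance adm_nonempty (A : Set (Rd d)) : Nonempty {φ : Zd d → Rn n //
    ∀ z : Zd d, infDist (toRd z) Aᶜ ≤ irange d E0 → φ z = 0} := ⟨⟨0, fun _ _ => rfl⟩⟩

lemma mF_nonneg (hVnn : ∀ b ∈ E0, ∀ (ω : Ω) (r : Rn n), 0 ≤ V b ω r) (F : Rd d →L[ℝ] Rn n)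
    (ω : Ω) (A : Set (Rd d)) : 0 ≤ mF τ E0 V ω F A :=
  le_ciInf fun φ => energy1_nonneg hVnn F ω φ.1 A

lemma mF_le (hVnn : ∀ b ∈ E0, ∀ (ω : Ω) (r : Rn n), 0 ≤ V b ω r) (F : Rd d →L[ℝ] Rn n)
    (ω : Ω) (A : Set (Rd d)) (φ : Zd d → Rn n)
    (hφ : ∀ z : Zd d, infDist (toRd z) Aᶜ ≤ irange d E0 → φ z = 0) :
    mF τ E0 V ω F A ≤ energy1 τ E0 V ω (fun z => F (toRd z) + φ z) A :=
  ciInf_le (f := fun φ : {φ : Zd d → Rn n //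
    ∀ z : Zd d, infDist (toRd z) Aᶜ ≤ irange d E0 → φ z = 0} =>
      energy1 τ E0 V ω (fun z => F (toRd z) + φ.1 z) A)
    ⟨0, by rintro _ ⟨φ, rfl⟩; exact energy1_nonneg hVnn F ω φ.1 A⟩ ⟨φ, hφ⟩

lemma mF_exists (F : Rd d →L[ℝ] Rn n) (ω : Ω) (A : Set (Rd d)) (ε : ℝ) (hε : 0 < ε) :
    ∃ φ : Zd d → Rn n, (∀ z : Zd d, infDist (toRd z) Aᶜ ≤ irange d E0 → φ z = 0) ∧
      energy1 τ E0 V ω (fun z => F (toRd z) + φ z) A < mF τ E0 V ω F A + ε := by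
  obtain ⟨φ, hφ⟩ := exists_lt_of_ciInf_lt (show mF τ E0 V ω F A < mF τ E0 V ω F A + ε by linarith)
  exact ⟨φ.1, φ.2, hφ⟩

lemma mF_shift (hVnn : ∀ b ∈ E0, ∀ (ω : Ω) (r : Rn n), 0 ≤ V b ω r)
    (hτadd : ∀ x y : Zd d, τ (x + y) = τ x ∘ τ y) (F : Rd d →L[ℝ] Rn n)
    (ω : Ω) (z : Zd d) (A : Set (Rd d)) :
    mF τ E0 V ω F (shiftS z A) ≤ mF τ E0 V (τ z ω) F A := by
  refine le_ciInf fun φ => ?_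
  have hc : (shiftS z A)ᶜ = (fun x => x + toRd z) '' Aᶜ := by
    ext x
    simp only [Set.mem_compl_iff, shiftS, Set.mem_ofPred_eq, Set.mem_image]
    constructor
    · intro hx; exact ⟨_, hx, by abel⟩
    · rintro ⟨y, hy, rfl⟩; simpa using hy
  refine (mF_le hVnn F ω _ (fun y => φ.1 (y - z)) fun y hy => ?_).trans (le_of_eq ?_)
  · refine φ.2 _ ?_
    have e : toRd y = (fun x => x + toRd z) (toRd (y - z)) := by
      simp [toRd_sub]
    rw [hc, e, Metric.infDist_image (isometry_add_right _)] at hy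
    exact hy
  · rw [energy1_eq, energy1_eq, ← (Equiv.addRight z).tsum_eq]
    refine tsum_congr fun w => ?_
    simp only [Equiv.coe_addRight, loc, shiftS, Set.mem_ofPred_eq, toRd_add, add_sub_cancel_right,
      hτadd, Function.comp]
    have e : ∀ b, w + z + b - z = w + b := fun b => by abel
    simp only [e]

lemma mF_sub (hd : 2 ≤ d) (hVnn : ∀ b ∈ E0, ∀ (ω : Ω) (r : Rn n), 0 ≤ V b ω r)
    (F : Rd d →L[ℝ] Rn n)
    (ω : Ω) (ι : Type) (s : Finset ι) (A : ι → Set (Rd d)) (B : Set (Rd d))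
    (U : Finset (Zd d)) (hB : {z : Zd d | toRd z ∈ B}.Finite) (hAB : ∀ i ∈ s, A i ⊆ B)
    (hdisj : (s : Set ι).PairwiseDisjoint A)
    (hcov : ∀ z : Zd d, toRd z ∈ B → z ∈ U ∨ ∃ i ∈ s, toRd z ∈ A i) :
    mF τ E0 V ω F B ≤ ∑ i ∈ s, mF τ E0 V ω F (A i)
      + ∑ z ∈ U, ∑ b ∈ E0, V b (τ z ω) ((‖toRd b‖)⁻¹ • F (toRd b)) := by
  have hBne : (Bᶜ).Nonempty := by
    rw [Set.nonempty_compl]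
    rintro rfl
    have : Nonempty (Fin d) := ⟨⟨0, by omega⟩⟩
    have hinf : Infinite (Zd d) := inferInstance
    simp only [Set.mem_univ] at hB
    exact hinf.not_finite (Set.finite_univ_iff.1 hB)
  refine le_of_forall_pos_le_add fun ε hε => ?_
  have hε' : 0 < ε / (s.card + 1) := by positivity
  choose φ hφ1 hφ2 using fun i => mF_exists (τ := τ) (E0 := E0) (V := V) F ω (A i) _ hε'
  set Φ : Zd d → Rn n := fun z => ∑ i ∈ s, φ i z with hΦ
  have hΦadm : ∀ z : Zd d, infDist (toRd z) Bᶜ ≤ irange d E0 → Φ z = 0 := by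
    intro z hz
    refine Finset.sum_eq_zero fun i hi => hφ1 i z ?_
    exact (Metric.infDist_le_infDist_of_subset (Set.compl_subset_compl.2 (hAB i hi)) hBne).trans hz
  have hout : ∀ i, ∀ z : Zd d, toRd z ∉ A i → φ i z = 0 ∧ ∀ b ∈ E0, φ i (z + b) = 0 := by
    intro i z hz
    have hR : 0 ≤ irange d E0 := le_trans (by positivity) (le_max_left _ _)
    refine ⟨hφ1 i z ?_, fun b hb => hφ1 i _ ?_⟩
    · rw [Metric.infDist_zero_of_mem hz]; exact hR
    · refine (Metric.infDist_le_dist_of_mem (y := toRd z) hz).trans ?_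
      rw [dist_eq_norm, toRd_add, add_sub_cancel_left]
      exact norm_le_irange hb
  set L := hB.toFinset with hL
  have hLm : ∀ z, toRd z ∈ B → z ∈ L := fun z hz => by simpa [hL] using hz
  have hpt : ∀ z ∈ L, (if toRd z ∈ B then loc τ E0 V F ω Φ z else 0) ≤
      ∑ i ∈ s, (if toRd z ∈ A i then loc τ E0 V F ω (φ i) z else 0)
      + if z ∈ U then ∑ b ∈ E0, V b (τ z ω) ((‖toRd b‖)⁻¹ • F (toRd b)) else 0 := by
    intro z hz
    have hzB : toRd z ∈ B := by simpa [hL] using hz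
    rw [if_pos hzB]
    have hU0 : 0 ≤ if z ∈ U then ∑ b ∈ E0, V b (τ z ω) ((‖toRd b‖)⁻¹ • F (toRd b)) else 0 := by
      split_ifs
      · exact Finset.sum_nonneg fun b hb => hVnn b hb _ _
      · exact le_rfl
    have hs0 : ∀ i ∈ s, 0 ≤ (if toRd z ∈ A i then loc τ E0 V F ω (φ i) z else 0) := by
      intro i _
      split_ifs
      · exact loc_nonneg hVnn F ω _ z
      · exact le_rfl
    by_cases hex : ∃ i ∈ s, toRd z ∈ A i
    · obtain ⟨i, hi, hzi⟩ := hex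
      have hother : ∀ j ∈ s, j ≠ i → toRd z ∉ A j := fun j hj hji hzj =>
        Set.disjoint_left.1 (hdisj hj hi hji) hzj hzi
      have e1 : Φ z = φ i z :=
        Finset.sum_eq_single_of_mem i hi fun j hj hji => (hout j z (hother j hj hji)).1
      have e2 : loc τ E0 V F ω Φ z = loc τ E0 V F ω (φ i) z := by
        refine Finset.sum_congr rfl fun b hb => ?_
        have e3 : Φ (z + b) = φ i (z + b) :=
          Finset.sum_eq_single_of_mem i hi fun j hj hji => (hout j z (hother j hj hji)).2 b hb
        rw [e1, e3]
      have h1 := Finset.single_le_sum hs0 hi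
      rw [if_pos hzi] at h1
      rw [e2]
      linarith
    · push Not at hex
      have hzU : z ∈ U := (hcov z hzB).resolve_right (by push Not; exact hex)
      have e2 : loc τ E0 V F ω Φ z = ∑ b ∈ E0, V b (τ z ω) ((‖toRd b‖)⁻¹ • F (toRd b)) := by
        refine Finset.sum_congr rfl fun b hb => ?_
        have e3 : Φ (z + b) = 0 := Finset.sum_eq_zero fun j hj => (hout j z (hex j hj)).2 b hb
        have e1 : Φ z = 0 := Finset.sum_eq_zero fun j hj => (hout j z (hex j hj)).1
        rw [e1, e3, sub_zero, add_zero]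
      rw [e2, if_pos hzU]
      linarith [Finset.sum_nonneg hs0]
  have h1 := mF_le (τ := τ) hVnn F ω B Φ hΦadm
  rw [energy1_eq_sum ω F Φ B L hLm] at h1
  have h2 := Finset.sum_le_sum hpt
  rw [Finset.sum_add_distrib, Finset.sum_comm] at h2
  have h3 : ∑ i ∈ s, ∑ z ∈ L, (if toRd z ∈ A i then loc τ E0 V F ω (φ i) z else 0)
      ≤ ∑ i ∈ s, (mF τ E0 V ω F (A i) + ε / (s.card + 1)) := by
    refine Finset.sum_le_sum fun i hi => ?_
    rw [← energy1_eq_sum ω F (φ i) (A i) L fun z hz => hLm z (hAB i hi hz)]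
    exact (hφ2 i).le
  rw [Finset.sum_add_distrib, Finset.sum_const, nsmul_eq_mul] at h3
  have h4 : ∑ z ∈ L, (if z ∈ U then ∑ b ∈ E0, V b (τ z ω) ((‖toRd b‖)⁻¹ • F (toRd b)) else 0)
      ≤ ∑ z ∈ U, ∑ b ∈ E0, V b (τ z ω) ((‖toRd b‖)⁻¹ • F (toRd b)) := by
    rw [← Finset.sum_filter]
    refine Finset.sum_le_sum_of_subset_of_nonneg (fun z hz => (Finset.mem_filter.1 hz).2)
      fun z _ _ => Finset.sum_nonneg fun b hb => hVnn b hb _ _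
  have h5 : (s.card : ℝ) * (ε / (s.card + 1)) ≤ ε := by
    rw [mul_div_assoc', div_le_iff₀ (by positivity)]
    nlinarith
  linarith

lemma mF_meas (hVmeas : ∀ b ∈ E0, Measurable fun q : Ω × Rn n => V b q.1 q.2)
    (hVcont : ∀ b ∈ E0, ∀ ω : Ω, Continuous (V b ω))
    (hVnn : ∀ b ∈ E0, ∀ (ω : Ω) (r : Rn n), 0 ≤ V b ω r)
    (hτ : ∀ z, Measurable (τ z))
    (F : Rd d →L[ℝ] Rn n) (A : Set (Rd d)) (hA : {z : Zd d | toRd z ∈ A}.Finite) :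
    Measurable fun ω => mF τ E0 V ω F A := by
  set X := {φ : Zd d → Rn n // ∀ z : Zd d, infDist (toRd z) Aᶜ ≤ irange d E0 → φ z = 0} with hX
  set L := hA.toFinset with hL
  have hE : ∀ (ω : Ω) (φ : X), energy1 τ E0 V ω (fun z => F (toRd z) + φ.1 z) A
      = ∑ z ∈ L, ∑ b ∈ E0, V b (τ z ω) ((‖toRd b‖)⁻¹ • (F (toRd b) + (φ.1 (z + b) - φ.1 z))) := by
    intro ω φ
    rw [energy1_eq_sum ω F φ.1 A L fun z hz => by simpa [hL] using hz]
    refine Finset.sum_congr rfl fun z hz => ?_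
    rw [if_pos (by simpa [hL] using hz)]
    rfl
  have hcont : ∀ ω, Continuous fun φ : X => energy1 τ E0 V ω (fun z => F (toRd z) + φ.1 z) A := by
    intro ω
    simp_rw [hE]
    refine continuous_finsetSum _ fun z _ => continuous_finsetSum _ fun b hb => ?_
    refine (hVcont b hb _).comp ?_
    have h1 : ∀ y : Zd d, Continuous fun φ : X => φ.1 y := fun y =>
      (continuous_apply y).comp continuous_subtype_val
    exact Continuous.const_smul (continuous_const.add ((h1 _).sub (h1 _))) (‖toRd b‖)⁻¹
  have hne : Nonempty X := adm_nonempty A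
  have hsc : SecondCountableTopology (Zd d → Rn n) := inferInstance
  have hscX : SecondCountableTopology X :=
    TopologicalSpace.Subtype.secondCountableTopology _
  have hsep : TopologicalSpace.SeparableSpace X := inferInstance
  have heq : (fun ω => mF τ E0 V ω F A) = fun ω => ⨅ j : ℕ,
      energy1 τ E0 V ω (fun z => F (toRd z) + (TopologicalSpace.denseSeq X j).1 z) A := by
    funext ω
    refine le_antisymm (le_ciInf fun j => mF_le hVnn F ω A _ (TopologicalSpace.denseSeq X j).2) ?_
    refine le_ciInf fun φ => ?_
    have hcl : IsClosed {φ : X | (⨅ j : ℕ,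
        energy1 τ E0 V ω (fun z => F (toRd z) + (TopologicalSpace.denseSeq X j).1 z) A)
        ≤ energy1 τ E0 V ω (fun z => F (toRd z) + φ.1 z) A} :=
      isClosed_le continuous_const (hcont ω)
    exact (TopologicalSpace.denseRange_denseSeq X).induction_on (p := fun φ : X => (⨅ j : ℕ,
        energy1 τ E0 V ω (fun z => F (toRd z) + (TopologicalSpace.denseSeq X j).1 z) A)
        ≤ energy1 τ E0 V ω (fun z => F (toRd z) + φ.1 z) A) φ hcl fun j =>
        ciInf_le ⟨0, by rintro _ ⟨φ, rfl⟩; exact energy1_nonneg hVnn F ω _ A⟩ j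
  rw [heq]
  refine Measurable.iInf fun j => ?_
  simp_rw [hE]
  refine Finset.measurable_fun_sum _ fun z _ => Finset.measurable_fun_sum _ fun b hb => ?_
  exact (hVmeas b hb).comp ((hτ z).prodMk measurable_const)

end

lemma proc_mF (hd : 2 ≤ d) (P : Measure Ω) [IsProbabilityMeasure P]
    (τ : Zd d → Ω → Ω)
    (hτadd : ∀ x y : Zd d, τ (x + y) = τ x ∘ τ y)
    (hτmp : ∀ z : Zd d, MeasurePreserving (τ z) P P)
    (E0 : Finset (Zd d))
    (p c₁ : ℝ)
    (V : Zd d → Ω → Rn n → ℝ)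
    (hVmeas : ∀ b ∈ E0, Measurable fun q : Ω × Rn n => V b q.1 q.2)
    (hVcont : ∀ b ∈ E0, ∀ ω : Ω, Continuous (V b ω))
    (hVnn : ∀ b ∈ E0, ∀ (ω : Ω) (r : Rn n), 0 ≤ V b ω r)
    (lam : Zd d → Ω → ℝ)
    (hlammeas : ∀ b ∈ E0, Measurable (lam b))
    (hlamnn : ∀ b ∈ E0, ∀ ω : Ω, 0 ≤ lam b ω)
    (hgrowth : ∀ b ∈ E0, ∀ (ω : Ω) (r : Rn n),
      lam b ω * (‖r‖ ^ p / c₁ - c₁) ≤ V b ω r ∧ V b ω r ≤ c₁ * (1 + lam b ω * (‖r‖ ^ p + 1)))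
    (α : ℝ) (hα : 1 ≤ α)
    (hmomα : ∀ b ∈ E0, ∫⁻ ω, ENNReal.ofReal (lam b ω ^ α) ∂P < ⊤)
    (F : Rd d →L[ℝ] Rn n) :
    Proc P τ (fun ω A => mF τ E0 V ω F A)
      (fun ω => ∑ b ∈ E0, V b ω ((‖toRd b‖)⁻¹ • F (toRd b))) where
  nonneg := fun ω A => mF_nonneg hVnn F ω A
  h_nonneg := fun ω => Finset.sum_nonneg fun b hb => hVnn b hb _ _
  h_meas := Finset.measurable_fun_sum _ fun b hb =>
    (hVmeas b hb).comp (measurable_id.prodMk measurable_const)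
  h_int := by
    refine integrable_finsetSum _ fun b hb => ?_
    have hlam : Integrable (lam b) P := by
      have h1 : Integrable (fun ω => lam b ω ^ α) P := by
        refine ⟨((hlammeas b hb).pow_const α).aestronglyMeasurable, ?_⟩
        rw [hasFiniteIntegral_iff_ofReal (ae_of_all _ fun ω => Real.rpow_nonneg (hlamnn b hb ω) _)]
        exact hmomα b hb
      refine ((integrable_const (1 : ℝ)).add h1).mono' (hlammeas b hb).aestronglyMeasurable
        (ae_of_all _ fun ω => ?_)
      rw [Real.norm_eq_abs, abs_of_nonneg (hlamnn b hb ω)]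
      simp only [Pi.add_apply]
      have h0 := hlamnn b hb ω
      rcases le_total (lam b ω) 1 with h | h
      · linarith [Real.rpow_nonneg h0 α]
      · have := Real.rpow_le_rpow_of_exponent_le h hα
        rw [Real.rpow_one] at this
        linarith
    have hbd : Integrable (fun ω => c₁ * (1 + lam b ω *
        (‖(‖toRd b‖)⁻¹ • F (toRd b)‖ ^ p + 1))) P :=
      ((integrable_const (1 : ℝ)).add (hlam.mul_const _)).const_mul _
    refine hbd.mono' ((hVmeas b hb).comp
      (measurable_id.prodMk measurable_const)).aestronglyMeasurable (ae_of_all _ fun ω => ?_)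
    rw [Real.norm_eq_abs, abs_of_nonneg (hVnn b hb _ _)]
    exact (hgrowth b hb ω _).2
  meas := fun A hA => mF_meas hVmeas hVcont hVnn (fun z => (hτmp z).measurable) F A hA
  sub := fun ω ι s A B U hB hAB hdisj hcov => mF_sub hd hVnn F ω ι s A B U hB hAB hdisj hcov
  shift := fun ω z A => mF_shift hVnn hτadd F ω z A


lemma smul_closedBox (t : ℝ) (ht : 0 < t) (a b : Fin d → ℝ) :
    t • closedBox a b = closedBox (fun i => t * a i) (fun i => t * b i) := by
  ext x
  rw [Set.mem_smul_set_iff_inv_smul_mem₀ ht.ne']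
  simp only [closedBox, Set.mem_ofPred_eq, PiLp.smul_apply, smul_eq_mul]
  refine forall_congr' fun i => ?_
  rw [inv_mul_le_iff₀ ht, le_inv_mul_iff₀ ht]

lemma volume_closedBox (a b : Fin d → ℝ) (hab : ∀ i, a i ≤ b i) :
    (volume (closedBox a b)).toReal = ∏ i, (b i - a i) := by
  have h := (EuclideanSpace.volume_preserving_symm_measurableEquiv_toLp (Fin d)).symm
  have e : closedBox a b = (MeasurableEquiv.toLp 2 (Fin d → ℝ)).symm ⁻¹' (Set.Icc a b) := by
    ext x
    simp only [closedBox, Set.mem_ofPred_eq, Set.mem_preimage, Set.mem_Icc, Pi.le_def]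
    exact ⟨fun h => ⟨fun i => (h i).1, fun i => (h i).2⟩, fun h i => ⟨h.1 i, h.2 i⟩⟩
  rw [e, (EuclideanSpace.volume_preserving_symm_measurableEquiv_toLp (Fin d)).measure_preimage_equiv,
    Real.volume_Icc_pi_toReal hab]

lemma Proc.main {P : Measure Ω} {τ : Zd d → Ω → Ω} {m : Ω → Set (Rd d) → ℝ} {h : Ω → ℝ}
    (H : Proc P τ m h) (ω : Ω)
    (hω : GoodAll P τ m h ω)
    (hblk : ∀ δ : ℝ, 0 < δ → ∃ k : ℕ, 0 < k ∧ ∀ r : ℕ,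
      Wc P m * ((k : ℝ) * (2 * r + 1)) ^ d - m ω (blk d k r) ≤ δ * ((k : ℝ) * (2 * r + 1)) ^ d)
    (a b : Fin d → ℝ) (hab : ∀ i, a i < b i) :
    Tendsto (fun t : ℝ => m ω (t • closedBox a b) / (volume (t • closedBox a b)).toReal)
      atTop (𝓝 (Wc P m)) := by
  set vQ := ∏ i, (b i - a i) with hvQ
  have hvQ0 : 0 < vQ := Finset.prod_pos fun i _ => by linarith [hab i]
  rw [Metric.tendsto_nhds]
  intro ε hε
  filter_upwards [H.upper ω hω a b hab (ε / 2 * vQ) (by positivity),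
    H.lower ω hω hblk a b hab (ε / 2 * vQ) (by positivity), eventually_gt_atTop 0] with t h1 h2 ht
  have h1' := h1 (closedBox (fun i => t * a i) (fun i => t * b i))
    (fun x hx i => ⟨(hx i).1.le, (hx i).2.le⟩) le_rfl
  have htd : 0 < t ^ d := by positivity
  have hvol : (volume (t • closedBox a b)).toReal = t ^ d * vQ := by
    rw [smul_closedBox t ht, volume_closedBox _ _ fun i => by
      have := hab i; gcongr]
    simp_rw [← mul_sub]
    rw [Finset.prod_mul_distrib]
    simp [hvQ]
  rw [hvol, smul_closedBox t ht, Real.dist_eq, abs_lt]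
  have hpos : 0 < t ^ d * vQ := by positivity
  have hε2 : 0 < ε / 2 * (t ^ d * vQ) := by positivity
  constructor
  · rw [lt_sub_iff_add_lt, lt_div_iff₀ hpos]
    nlinarith
  · rw [sub_lt_iff_lt_add, div_lt_iff₀ hpos]
    nlinarith

/-- subadditive ergodic limit, Lemma 3.2 of the paper. -/
theorem ergodic_limit_mF
    {d n : ℕ} (hd : 2 ≤ d) (hn : 1 ≤ n)
    {Ω : Type*} [MeasurableSpace Ω] (P : Measure Ω) [IsProbabilityMeasure P]
    (τ : Zd d → Ω → Ω) (hτ0 : τ 0 = id)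
    (hτadd : ∀ x y : Zd d, τ (x + y) = τ x ∘ τ y)
    (hτmp : ∀ z : Zd d, MeasurePreserving (τ z) P P)
    (hτerg : ∀ B : Set Ω, MeasurableSet B → (∀ z : Zd d, τ z ⁻¹' B = B) → P B = 0 ∨ P B = 1)
    (E0 : Finset (Zd d)) (hE00 : (0 : Zd d) ∉ E0) (hE0b : ∀ i : Fin d, stdb i ∈ E0)
    (p c₁ : ℝ) (hp : 1 < p) (hc₁ : 0 < c₁)
    (V : Zd d → Ω → Rn n → ℝ)
    (hVmeas : ∀ b ∈ E0, Measurable fun q : Ω × Rn n => V b q.1 q.2)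
    (hVcont : ∀ b ∈ E0, ∀ ω : Ω, Continuous (V b ω))
    (hVnn : ∀ b ∈ E0, ∀ (ω : Ω) (r : Rn n), 0 ≤ V b ω r)
    (lam : Zd d → Ω → ℝ)
    (hlammeas : ∀ b ∈ E0, Measurable (lam b))
    (hlamnn : ∀ b ∈ E0, ∀ ω : Ω, 0 ≤ lam b ω)
    (hgrowth : ∀ b ∈ E0, ∀ (ω : Ω) (r : Rn n),
      lam b ω * (‖r‖ ^ p / c₁ - c₁) ≤ V b ω r ∧ V b ω r ≤ c₁ * (1 + lam b ω * (‖r‖ ^ p + 1)))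
    (α β : ℝ) (hα : 1 ≤ α) (hβ : 1 / (p - 1) ≤ β)
    (hmomα : ∀ b ∈ E0, ∫⁻ ω, ENNReal.ofReal (lam b ω ^ α) ∂P < ⊤)
    (hmomβ : ∀ i : Fin d, ∫⁻ ω, ENNReal.ofReal (lam (stdb i) ω) ^ (-β) ∂P < ⊤)
    (F : Rd d →L[ℝ] Rn n) :
    ∃ ΩF : Set Ω, MeasurableSet ΩF ∧ P ΩF = 1 ∧
      (∀ ω ∈ ΩF, ∀ a b : Fin d → ℝ, (∀ i, a i < b i) →
        Tendsto (fun t : ℝ =>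
            mF τ E0 V ω F (t • closedBox a b) / (volume (t • closedBox a b)).toReal)
          atTop (𝓝 (W0 P τ E0 V F))) ∧
      Tendsto (fun k : ℕ => ((k : ℝ) ^ d)⁻¹ * ∫ ω, mF τ E0 V ω F (cube d k) ∂P)
        atTop (𝓝 (W0 P τ E0 V F)) ∧
      W0 P τ E0 V F =
        ⨅ k : {k : ℕ // 0 < k}, (((k : ℕ) : ℝ) ^ d)⁻¹ * ∫ ω, mF τ E0 V ω F (cube d k) ∂P := by
  have H := proc_mF hd P τ hτadd hτmp E0 p c₁ V hVmeas hVcont hVnn lam hlammeas hlamnn hgrowth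
    α hα hmomα F
  have hgood := H.ae_goodAll hτ0 hτadd hτmp hτerg
  have hb := H.ae_blk hτadd hτmp hgood
  have hall := hgood.and hb
  obtain ⟨N, hsub, hNm, hN0⟩ := exists_measurable_superset_of_null (ae_iff.1 hall)
  refine ⟨Nᶜ, hNm.compl, (prob_compl_eq_one_iff hNm).2 hN0, ?_, H.tendsto_wk hτmp hgood, rfl⟩
  intro ω hω a b hab
  have h2 := not_not.1 fun hn' => hω (hsub hn')
  exact H.main ω h2.1 h2.2 a b hab

end StochHom
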